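/- arXiv:quant-ph/0406162 — 2 statements merged into one kernel-verified Lean document; each statement's English description precedes it below -/
import Mathlib

section
/- Let ρ^{ABC} be a state of a tripartite quantum system on finite-dimensional Hilbert spaces that saturates strong subadditivity at pivot B, i.e. S(AB) + S(BC) = S(ABC) + S(B). Then there exists an orthogonal decomposition of B's Hilbert space H_B = ⊕_j H_{b_j^L} ⊗ H_{b_j^R} into mutually orthogonal subspaces, each presented as a tensor product of two Hilbert spaces, together with a probability distribution (p_j), states ρ_j^{A b_j^L} on H_A ⊗ H_{b_j^L} and states ρ_j^{b_j^R C} on H_{b_j^R} ⊗ H_C, such that ρ^{ABC} = ⊕_j p_j · ρ_j^{A b_j^L} ⊗ ρ_j^{b_j^R C}. -/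
/-!
Saturation of strong subadditivity says that the relative entropy `D(ρ_ABC ‖ ρ_AB ⊗ 1_C)` does not
decrease when `A` is traced out, i.e. that it equals `D(ρ_BC ‖ ρ_B ⊗ 1_C)`.

*Equality in data processing.* With the relative modular operator `Δ : X ↦ σ X ρ⁻¹`, the relative
entropy `D(ρ ‖ σ)` is an integral over `t > 0` of the resolvent forms
`⟨ρ^{1/2}, (Δ + t)⁻¹ ρ^{1/2}⟩`. Each form is the maximum of a concave quadratic functional, and
every competitor for the reduced pair gives one for the full pair, so the forms are comparable for
each `t`. Equality of the integrals forces equality for every `t`, hence equality of the maximizers,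
hence of all functions of the two modular operators. For the square root this is the Petz recovery
formula `ρ = ρ_AB^{1/2} ρ_B^{-1/2} ρ_BC ρ_B^{-1/2} ρ_AB^{1/2}`.

*Commuting algebras on `B`.* Let `a_{αβ}` be the `B`-blocks of `ρ_AB^{1/2}` and `b = ρ_B^{1/2}`,
made invertible by the identity on the kernel of `ρ_B`.
Tracing out `A` in the recovery formula shows that the `B`-blocks of `b⁻¹ ρ_BC b⁻¹` are fixed
points of the unital completely positive map `y ↦ b⁻¹ (∑ a_{αβ} y a_{αβ}ᴴ) b⁻¹`. It has the
faithful invariant state `Tr b² ·`, so its fixed points form a commutant `N`, and conjugation by `b`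
preserves `N`. Consequently `b = h k` with `h ∈ N` and `k` in the commutant of `N`, and the
`B`-blocks of `ρ` itself are products `X_{αα'} Y_{cc'}` with `Y_{cc'} ∈ N` and `X_{αα'}` in the
commutant of `N`.

*Block form.* A star-closed matrix algebra and its commutant are simultaneously of the form
`⊕ⱼ 1 ⊗ M_{r j}` and `⊕ⱼ M_{l j} ⊗ 1` in a suitable orthonormal basis. In this basis `ρ` is
`⊕ⱼ Λⱼ ⊗ Γⱼ`; each block is a compression of `ρ`, hence positive, and can be rescaled to `pⱼ` times
a product of two states.
-/

open scoped BigOperators ComplexOrder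

/-- Von Neumann entropy (base 2) of a matrix: for a Hermitian matrix, the Shannon
entropy of its eigenvalues; junk value `0` for non-Hermitian matrices. -/
noncomputable def vNEntropy {n : Type*} [Fintype n] [DecidableEq n] (M : Matrix n n ℂ) : ℝ :=
  if h : M.IsHermitian then -∑ i, (h.eigenvalues i) * Real.logb 2 (h.eigenvalues i) else 0

/-- A density matrix: positive semidefinite with trace one. -/
def IsState {n : Type*} [Fintype n] [DecidableEq n] (M : Matrix n n ℂ) : Prop :=
  M.PosSemidef ∧ M.trace = 1

section Tri

variable {A B C : Type*} [Fintype A] [DecidableEq A] [Fintype B] [DecidableEq B]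
  [Fintype C] [DecidableEq C]
  (ρ : Matrix (A × B × C) (A × B × C) ℂ)

/-- The reduced state on `A ⊗ C` of a tripartite state. -/
noncomputable def redAC : Matrix (A × C) (A × C) ℂ :=
  Matrix.of fun p q : A × C => ∑ b, ρ (p.1, b, p.2) (q.1, b, q.2)

/-- Entropies of the marginals of a tripartite state. -/
noncomputable def S3A : ℝ :=
  vNEntropy (Matrix.of fun a a' : A => ∑ b, ∑ c, ρ (a, b, c) (a', b, c))
noncomputable def S3B : ℝ :=
  vNEntropy (Matrix.of fun b b' : B => ∑ a, ∑ c, ρ (a, b, c) (a, b', c))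
noncomputable def S3C : ℝ :=
  vNEntropy (Matrix.of fun c c' : C => ∑ a, ∑ b, ρ (a, b, c) (a, b, c'))
noncomputable def S3AB : ℝ :=
  vNEntropy (Matrix.of fun p q : A × B => ∑ c, ρ (p.1, p.2, c) (q.1, q.2, c))
noncomputable def S3AC : ℝ := vNEntropy (redAC ρ)
noncomputable def S3BC : ℝ :=
  vNEntropy (Matrix.of fun p q : B × C => ∑ a, ρ (a, p.1, p.2) (a, q.1, q.2))
noncomputable def S3ABC : ℝ := vNEntropy ρ

end Tri

open Matrix

/-! ### Functional calculus of Hermitian matrices -/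

section FunctionalCalculus

variable {n : Type*} [Fintype n] [DecidableEq n] {A : Matrix n n ℂ}

theorem continuousOn_spectrum_real (A : Matrix n n ℂ) (f : ℝ → ℝ) :
    ContinuousOn f (spectrum ℝ A) :=
  A.finite_real_spectrum.continuousOn f

theorem cfc_mul_cfc (f g : ℝ → ℝ) (A : Matrix n n ℂ) :
    cfc f A * cfc g A = cfc (fun x => f x * g x) A :=
  (cfc_mul f g A (continuousOn_spectrum_real A f) (continuousOn_spectrum_real A g)).symm

theorem isHermitian_cfc (f : ℝ → ℝ) (A : Matrix n n ℂ) : (cfc f A).IsHermitian :=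
  cfc_predicate f A

theorem spectrum_real_nonneg (hA : A.PosSemidef) {x : ℝ} (hx : x ∈ spectrum ℝ A) : 0 ≤ x :=
  Complex.zero_le_real.mp <| (posSemidef_iff_isHermitian_and_spectrum_nonneg.mp hA).2 <|
    (spectrum.algebraMap_mem_iff ℂ).mpr hx

theorem cfc_id_of_isHermitian (hA : A.IsHermitian) : cfc (fun x : ℝ => x) A = A :=
  cfc_id' ℝ A hA.isSelfAdjoint

theorem trace_cfc (hA : A.IsHermitian) (f : ℝ → ℝ) :
    (cfc f A).trace = ∑ i, (f (hA.eigenvalues i) : ℂ) := by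
  rw [hA.cfc_eq, IsHermitian.cfc, Unitary.conjStarAlgAut_apply, trace_mul_cycle,
    Unitary.coe_star_mul_self, one_mul, trace_diagonal]
  rfl

theorem map_cfc {m : Type*} [Fintype m] [DecidableEq m]
    (Φ : Matrix n n ℂ →⋆ₐ[ℂ] Matrix m m ℂ) (hA : A.IsHermitian) (f : ℝ → ℝ) :
    Φ (cfc f A) = cfc f (Φ A) :=
  StarAlgHomClass.map_cfc Φ f A (continuousOn_spectrum_real A f)
    (LinearMap.continuous_of_finiteDimensional Φ.toAlgHom.toLinearMap) hA (hA.isSelfAdjoint.map Φ)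

theorem cfc_sqrt_mul_self (hA : A.PosSemidef) : cfc Real.sqrt A * cfc Real.sqrt A = A := by
  rw [cfc_mul_cfc]
  exact (cfc_congr fun x hx => Real.mul_self_sqrt (spectrum_real_nonneg hA hx)).trans
    (cfc_id_of_isHermitian hA.isHermitian)

/-- The orthogonal projection onto the range of the Hermitian matrix `A`. -/
noncomputable def suppProj (A : Matrix n n ℂ) : Matrix n n ℂ :=
  cfc (fun x : ℝ => if x = 0 then 0 else 1) A

theorem isHermitian_suppProj (A : Matrix n n ℂ) : (suppProj A).IsHermitian :=
  isHermitian_cfc _ A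

theorem suppProj_mul_cfc (A : Matrix n n ℂ) {f : ℝ → ℝ} (hf : f 0 = 0) :
    suppProj A * cfc f A = cfc f A := by
  rw [suppProj, cfc_mul_cfc]
  congr 1
  funext x
  split_ifs with hx <;> simp [hx, hf]

theorem suppProj_mul_self (hA : A.IsHermitian) : suppProj A * A = A := by
  simpa only [cfc_id_of_isHermitian hA] using suppProj_mul_cfc A (f := fun x => x) rfl

theorem suppProj_mul_suppProj (A : Matrix n n ℂ) : suppProj A * suppProj A = suppProj A :=
  suppProj_mul_cfc A (if_pos rfl)

theorem self_mul_cfc_inv (hA : A.IsHermitian) : A * cfc (fun x : ℝ => x⁻¹) A = suppProj A := by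
  nth_rw 1 [← cfc_id_of_isHermitian hA]
  rw [cfc_mul_cfc, suppProj]
  congr 1
  funext x
  split_ifs with hx <;> simp [hx]

theorem mul_suppProj_eq_zero {m : Type*} (hA : A.IsHermitian) {D : Matrix m n ℂ}
    (hD : D * A = 0) : D * suppProj A = 0 := by
  rw [← self_mul_cfc_inv hA, ← Matrix.mul_assoc, hD, Matrix.zero_mul]

theorem cfc_sqrt_mul_cfc_inv_sqrt (hA : A.PosSemidef) :
    cfc Real.sqrt A * cfc (fun x => (Real.sqrt x)⁻¹) A = suppProj A := by
  rw [cfc_mul_cfc]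
  refine cfc_congr fun x hx => ?_
  rcases (spectrum_real_nonneg hA hx).eq_or_lt with rfl | hpos
  · simp
  · simp [hpos.ne', (Real.sqrt_pos.mpr hpos).ne']

theorem cfc_inv_sqrt_mul_mul_cfc_inv_sqrt (hA : A.PosSemidef) :
    cfc (fun x => (Real.sqrt x)⁻¹) A * A * cfc (fun x => (Real.sqrt x)⁻¹) A = suppProj A := by
  nth_rw 2 [← cfc_sqrt_mul_self hA]
  rw [← Matrix.mul_assoc, Matrix.mul_assoc, cfc_commute_cfc _ Real.sqrt,
    cfc_sqrt_mul_cfc_inv_sqrt hA, suppProj_mul_suppProj]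

theorem mul_cfc_sqrt_of_mul_eq (hA : A.IsHermitian) {P : Matrix n n ℂ} (hP : P * A = A) :
    P * cfc Real.sqrt A = cfc Real.sqrt A := by
  have hsqrt : A * cfc (fun x => (Real.sqrt x)⁻¹) A = cfc Real.sqrt A := by
    nth_rw 1 [← cfc_id_of_isHermitian hA]
    simp only [cfc_mul_cfc, ← div_eq_mul_inv, Real.div_sqrt]
  rw [← hsqrt, ← Matrix.mul_assoc, hP]

theorem vNEntropy_mul_log_two (hA : A.IsHermitian) :
    vNEntropy A * Real.log 2 = -(A * cfc Real.log A).trace.re := by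
  have hlog : A * cfc Real.log A = cfc (fun x => x * Real.log x) A := by
    nth_rw 1 [← cfc_id_of_isHermitian hA]
    rw [cfc_mul_cfc]
  rw [vNEntropy, dif_pos hA, hlog, trace_cfc hA, ← Complex.ofReal_sum, Complex.ofReal_re,
    neg_mul, Finset.sum_mul]
  simp only [Real.logb, mul_assoc, div_mul_cancel₀ _ (Real.log_pos one_lt_two).ne']

end FunctionalCalculus

theorem mul_eq_zero_of_trace_mul_mul_conjTranspose {m n : Type*} [Fintype m] [Fintype n]
    {A : Matrix n n ℂ} (hA : A.PosSemidef) {D : Matrix m n ℂ} (hD : (D * A * Dᴴ).trace = 0) :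
    D * A = 0 := by
  classical
  have hD_sqrt : D * cfc Real.sqrt A = 0 := by
    rw [← trace_mul_conjTranspose_self_eq_zero_iff, conjTranspose_mul, isHermitian_cfc,
      Matrix.mul_assoc, ← Matrix.mul_assoc (cfc _ _), cfc_sqrt_mul_self hA, ← Matrix.mul_assoc, hD]
  rw [← cfc_sqrt_mul_self hA, ← Matrix.mul_assoc, hD_sqrt, Matrix.zero_mul]

theorem eq_of_mul_eq_of_trace_mul_conjTranspose_eq {m n : Type*} [Fintype m] [Fintype n]
    {P : Matrix n n ℂ} (hP : P.IsHermitian) (hP_idem : P * P = P) {R W : Matrix m n ℂ}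
    (hRP : R * P = W) (htrace : (R * Rᴴ).trace = (W * Wᴴ).trace) : R = W := by
  have hRW : R * Wᴴ = W * Wᴴ := by
    rw [← hRP, conjTranspose_mul, hP.eq, Matrix.mul_assoc R P, ← Matrix.mul_assoc P, hP_idem]
  have hWR : W * Rᴴ = W * Wᴴ := by
    simpa only [conjTranspose_mul, conjTranspose_conjTranspose] using congrArg conjTranspose hRW
  rw [← sub_eq_zero, ← trace_mul_conjTranspose_self_eq_zero_iff]
  simp only [conjTranspose_sub, Matrix.sub_mul, Matrix.mul_sub, trace_sub, hRW, hWR, htrace,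
    sub_self, trace_zero]

section SpectralProjections

variable {n : Type*} [Fintype n] [DecidableEq n] {A : Matrix n n ℂ}

/-- The real spectrum of a matrix as a finset. -/
noncomputable def realSpectrum (A : Matrix n n ℂ) : Finset ℝ :=
  A.finite_real_spectrum.toFinset

/-- The spectral projection of the Hermitian matrix `A` for the eigenvalue `x`. -/
noncomputable def spectralProj (A : Matrix n n ℂ) (x : ℝ) : Matrix n n ℂ :=
  cfc (fun y => if y = x then 1 else 0) A

theorem mem_realSpectrum {x : ℝ} : x ∈ realSpectrum A ↔ x ∈ spectrum ℝ A :=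
  Set.Finite.mem_toFinset _

theorem cfc_mul_spectralProj (f : ℝ → ℝ) (A : Matrix n n ℂ) (x : ℝ) :
    cfc f A * spectralProj A x = f x • spectralProj A x := by
  rw [spectralProj, cfc_mul_cfc, ← cfc_smul _ _ _ (continuousOn_spectrum_real A _)]
  congr 1
  funext y
  split_ifs with hy <;> simp [hy]

theorem spectralProj_mul_cfc (f : ℝ → ℝ) (A : Matrix n n ℂ) (x : ℝ) :
    spectralProj A x * cfc f A = f x • spectralProj A x := by
  rw [spectralProj, cfc_commute_cfc, ← spectralProj, cfc_mul_spectralProj]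

theorem cfc_eq_sum_spectralProj (f : ℝ → ℝ) (A : Matrix n n ℂ) :
    cfc f A = ∑ x ∈ realSpectrum A, f x • spectralProj A x := by
  simp only [spectralProj, ← cfc_smul _ _ _ (continuousOn_spectrum_real A _)]
  rw [← cfc_sum _ A (realSpectrum A) fun _ _ => continuousOn_spectrum_real A _]
  refine cfc_congr fun y hy => ?_
  simp [mem_realSpectrum.mpr hy]

theorem sum_spectralProj (hA : A.IsHermitian) : ∑ x ∈ realSpectrum A, spectralProj A x = 1 := by
  have hone := cfc_eq_sum_spectralProj (fun _ => 1) A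
  rw [cfc_const_one ℝ A hA.isSelfAdjoint] at hone
  simpa only [one_smul] using hone.symm

end SpectralProjections

/-! ### Resolvents of finitely many points -/

section Resolvents

open Filter Topology

variable {ι : Type*} {s : Finset ι} {w x : ι → ℝ}

theorem hasDerivAt_sum_mul_log_add (hx : ∀ i ∈ s, 0 ≤ x i) {t : ℝ} (ht : 0 < t) :
    HasDerivAt (fun t => ∑ i ∈ s, w i * Real.log (x i + t)) (∑ i ∈ s, w i * (x i + t)⁻¹) t := by
  refine HasDerivAt.fun_sum fun i hi => ?_
  have hpos : x i + t ≠ 0 := (add_pos_of_nonneg_of_pos (hx i hi) ht).ne'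
  simpa using (((hasDerivAt_id t).const_add (x i)).log hpos).const_mul (w i)

theorem monotoneOn_sum_mul_log_add (hx : ∀ i ∈ s, 0 ≤ x i) (hw : ∀ i ∈ s, x i = 0 → w i = 0)
    (hres : ∀ t > 0, 0 ≤ ∑ i ∈ s, w i * (x i + t)⁻¹) :
    MonotoneOn (fun t => ∑ i ∈ s, w i * Real.log (x i + t)) (Set.Ici 0) := by
  have hcont : ContinuousOn (fun t => ∑ i ∈ s, w i * Real.log (x i + t)) (Set.Ici 0) := by
    refine continuousOn_finsetSum _ fun i hi => ?_
    rcases (hx i hi).eq_or_lt with h | h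
    · simp [hw i hi h.symm, continuousOn_const]
    · exact continuousOn_const.mul <| ContinuousOn.log (by fun_prop) fun t ht =>
        (add_pos_of_pos_of_nonneg h ht).ne'
  refine monotoneOn_of_deriv_nonneg (convex_Ici 0) hcont ?_ ?_ <;> rw [interior_Ici]
  · exact fun t ht => (hasDerivAt_sum_mul_log_add hx ht).differentiableAt.differentiableWithinAt
  · exact fun t ht => (hasDerivAt_sum_mul_log_add hx ht).deriv ▸ hres t ht

theorem tendsto_sum_mul_log_add_atTop (hx : ∀ i ∈ s, 0 ≤ x i) (hsum : ∑ i ∈ s, w i = 0) :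
    Tendsto (fun t => ∑ i ∈ s, w i * Real.log (x i + t)) atTop (𝓝 0) := by
  have hlim : Tendsto (fun t : ℝ => ∑ i ∈ s, w i * Real.log (x i * t⁻¹ + 1)) atTop
      (𝓝 (∑ i ∈ s, w i * Real.log (x i * 0 + 1))) :=
    tendsto_finsetSum _ fun i _ => Tendsto.const_mul _ <|
      ((tendsto_inv_atTop_zero.const_mul (x i)).add_const 1).log (by simp)
  simp only [mul_zero, zero_add, Real.log_one, Finset.sum_const_zero] at hlim
  refine hlim.congr' ?_
  filter_upwards [eventually_gt_atTop 0] with t ht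
  calc ∑ i ∈ s, w i * Real.log (x i * t⁻¹ + 1)
      = ∑ i ∈ s, (w i * Real.log (x i + t) - w i * Real.log t) := by
        refine Finset.sum_congr rfl fun i hi => ?_
        have hpos : x i + t ≠ 0 := (add_pos_of_nonneg_of_pos (hx i hi) ht).ne'
        have hdiv : x i * t⁻¹ + 1 = (x i + t) / t := by field_simp
        rw [hdiv, Real.log_div hpos ht.ne', mul_sub]
    _ = ∑ i ∈ s, w i * Real.log (x i + t) := by
        rw [Finset.sum_sub_distrib, ← Finset.sum_mul, hsum, zero_mul, sub_zero]

-- `∑ wᵢ log (xᵢ + t)` is monotone in `t`, vanishes at `t = 0` and tends to `0` at infinity.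
theorem sum_mul_inv_add_eq_zero (hx : ∀ i ∈ s, 0 ≤ x i) (hw : ∀ i ∈ s, x i = 0 → w i = 0)
    (hsum : ∑ i ∈ s, w i = 0) (hlog : ∑ i ∈ s, w i * Real.log (x i) = 0)
    (hres : ∀ t > 0, 0 ≤ ∑ i ∈ s, w i * (x i + t)⁻¹) {t : ℝ} (ht : 0 < t) :
    ∑ i ∈ s, w i * (x i + t)⁻¹ = 0 := by
  have hmono := monotoneOn_sum_mul_log_add hx hw hres
  have hzero : ∀ u > 0, ∑ i ∈ s, w i * Real.log (x i + u) = 0 := by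
    intro u hu
    refine le_antisymm (ge_of_tendsto (tendsto_sum_mul_log_add_atTop hx hsum) ?_) ?_
    · filter_upwards [eventually_ge_atTop u] with v hv
      exact hmono hu.le (hu.le.trans hv) hv
    · simpa [hlog] using hmono Set.self_mem_Ici hu.le hu.le
  have hconst : (fun u => ∑ i ∈ s, w i * Real.log (x i + u)) =ᶠ[𝓝 t] fun _ => 0 := by
    filter_upwards [lt_mem_nhds ht] with u hu using hzero u hu
  exact ((hasDerivAt_sum_mul_log_add hx ht).congr_of_eventuallyEq hconst.symm).unique
    (hasDerivAt_const t (0 : ℝ))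

theorem sum_mul_inv_add_eq_of_sum_mul_log_eq {ι' : Type*} {s' : Finset ι'} {w' x' : ι' → ℝ}
    (hx : ∀ i ∈ s, 0 ≤ x i) (hw : ∀ i ∈ s, x i = 0 → w i = 0)
    (hx' : ∀ i ∈ s', 0 ≤ x' i) (hw' : ∀ i ∈ s', x' i = 0 → w' i = 0)
    (hsum : ∑ i ∈ s, w i = ∑ i ∈ s', w' i)
    (hlog : ∑ i ∈ s, w i * Real.log (x i) = ∑ i ∈ s', w' i * Real.log (x' i))
    (hres : ∀ t > 0, ∑ i ∈ s', w' i * (x' i + t)⁻¹ ≤ ∑ i ∈ s, w i * (x i + t)⁻¹)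
    {t : ℝ} (ht : 0 < t) :
    ∑ i ∈ s', w' i * (x' i + t)⁻¹ = ∑ i ∈ s, w i * (x i + t)⁻¹ := by
  have key := sum_mul_inv_add_eq_zero (s := s.disjSum s') (w := Sum.elim w fun i => -w' i)
    (x := Sum.elim x x') (t := t)
  simp only [Finset.mem_disjSum, Finset.sum_disjSum, Sum.elim_inl, Sum.elim_inr, neg_mul,
    Finset.sum_neg_distrib, ← sub_eq_add_neg, sub_nonneg, sub_eq_zero] at key
  refine (key ?_ ?_ hsum hlog hres ht).symm
  · rintro _ (⟨i, hi, rfl⟩ | ⟨i, hi, rfl⟩)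
    exacts [hx i hi, hx' i hi]
  · rintro _ (⟨i, hi, rfl⟩ | ⟨i, hi, rfl⟩) h
    exacts [hw i hi h, neg_eq_zero.mpr (hw' i hi h)]

-- Interpolate `φ x * ∏ j, (x + j + 1)` by a polynomial and expand its quotient by
-- `∏ j, (x + j + 1)` in partial fractions.
theorem exists_eq_sum_mul_inv_add (s : Finset ℝ) (hs : ∀ x ∈ s, 0 ≤ x) (φ : ℝ → ℝ) :
    ∃ c : ℕ → ℝ, ∀ x ∈ s, φ x = ∑ j ∈ Finset.range s.card, c j * (x + (j + 1))⁻¹ := by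
  set N := Finset.range s.card
  set v : ℕ → ℝ := fun j => -(j + 1)
  have hv : Set.InjOn v N := fun i _ j _ hij => by simpa [v] using hij
  have hne : ∀ x ∈ s, ∀ j ∈ N, x ≠ v j := fun x hx j _ =>
    ((neg_neg_of_pos j.cast_add_one_pos).trans_le (hs x hx)).ne'
  set p := Lagrange.interpolate s id fun x => φ x * (Lagrange.nodal N v).eval x
  have hdeg : p.degree < N.card := by
    rw [Finset.card_range]
    exact Lagrange.degree_interpolate_lt _ Function.injective_id.injOn
  refine ⟨fun j => Lagrange.nodalWeight N v j * p.eval (v j), fun x hx => ?_⟩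
  have hnode : (Lagrange.nodal N v).eval x ≠ 0 := Lagrange.eval_nodal_not_at_node (hne x hx)
  refine mul_left_cancel₀ hnode ?_
  calc (Lagrange.nodal N v).eval x * φ x = p.eval x := by
        rw [mul_comm]
        exact (Lagrange.eval_interpolate_at_node (v := id)
          (fun x => φ x * (Lagrange.nodal N v).eval x) Function.injective_id.injOn hx).symm
    _ = (Lagrange.interpolate N v fun j => p.eval (v j)).eval x :=
        congrArg _ (Lagrange.eq_interpolate hv hdeg)
    _ = _ := by
        rw [Lagrange.eval_interpolate_not_at_node _ (hne x hx)]
        congr! 2 with j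
        simp only [v, sub_neg_eq_add]
        ring

end Resolvents

/-! ### Functions of the relative modular operator -/

section RelativeModular

variable {n : Type*} [Fintype n] [DecidableEq n] {σ ρ : Matrix n n ℂ}

/-- The double spectral sum `∑ F(x, y) E_x F_y` over the spectral projections `E_x` of `σ` and `F_y`
of `ρ`: the function `F` of left multiplication by `σ` and right multiplication by `ρ`, applied to
the identity matrix. -/
noncomputable def doubleSpectralSum (σ ρ : Matrix n n ℂ) : (ℝ × ℝ → ℝ) →ₗ[ℝ] Matrix n n ℂ where
  toFun F := ∑ p ∈ realSpectrum σ ×ˢ realSpectrum ρ,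
    F p • (spectralProj σ p.1 * spectralProj ρ p.2)
  map_add' F G := by simp only [Pi.add_apply, add_smul, Finset.sum_add_distrib]
  map_smul' c F := by
    simp only [Pi.smul_apply, smul_eq_mul, mul_smul, Finset.smul_sum, RingHom.id_apply]

theorem doubleSpectralSum_apply (σ ρ : Matrix n n ℂ) (F : ℝ × ℝ → ℝ) :
    doubleSpectralSum σ ρ F = ∑ p ∈ realSpectrum σ ×ˢ realSpectrum ρ,
      F p • (spectralProj σ p.1 * spectralProj ρ p.2) :=
  rfl

theorem doubleSpectralSum_mul_mul (σ ρ : Matrix n n ℂ) (f g : ℝ → ℝ) :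
    doubleSpectralSum σ ρ (fun p => f p.1 * g p.2) = cfc f σ * cfc g ρ := by
  rw [cfc_eq_sum_spectralProj f, cfc_eq_sum_spectralProj g, Finset.sum_mul_sum,
    ← Finset.sum_product']
  simp only [doubleSpectralSum_apply, smul_mul_smul_comm]

theorem cfc_mul_doubleSpectralSum (σ ρ : Matrix n n ℂ) (f : ℝ → ℝ) (F : ℝ × ℝ → ℝ) :
    cfc f σ * doubleSpectralSum σ ρ F = doubleSpectralSum σ ρ fun p => f p.1 * F p := by
  simp only [doubleSpectralSum_apply, Matrix.mul_sum, Matrix.mul_smul, ← Matrix.mul_assoc,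
    cfc_mul_spectralProj, Matrix.smul_mul, smul_smul, mul_comm]

theorem doubleSpectralSum_mul_cfc (σ ρ : Matrix n n ℂ) (F : ℝ × ℝ → ℝ) (g : ℝ → ℝ) :
    doubleSpectralSum σ ρ F * cfc g ρ = doubleSpectralSum σ ρ fun p => F p * g p.2 := by
  simp only [doubleSpectralSum_apply, Matrix.sum_mul, Matrix.smul_mul, Matrix.mul_assoc,
    spectralProj_mul_cfc, Matrix.mul_smul, smul_smul]

theorem mul_doubleSpectralSum (hσ : σ.IsHermitian) (ρ : Matrix n n ℂ) (F : ℝ × ℝ → ℝ) :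
    σ * doubleSpectralSum σ ρ F = doubleSpectralSum σ ρ fun p => p.1 * F p := by
  simpa only [cfc_id_of_isHermitian hσ] using cfc_mul_doubleSpectralSum σ ρ (fun x => x) F

theorem doubleSpectralSum_mul (σ : Matrix n n ℂ) (hρ : ρ.IsHermitian) (F : ℝ × ℝ → ℝ) :
    doubleSpectralSum σ ρ F * ρ = doubleSpectralSum σ ρ fun p => F p * p.2 := by
  simpa only [cfc_id_of_isHermitian hρ] using doubleSpectralSum_mul_cfc σ ρ F fun y => y

theorem doubleSpectralSum_snd (hσ : σ.IsHermitian) (hρ : ρ.IsHermitian) :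
    doubleSpectralSum σ ρ Prod.snd = ρ := by
  have hmul := doubleSpectralSum_mul_mul σ ρ (fun _ => 1) fun y => y
  rw [cfc_const_one ℝ σ hσ.isSelfAdjoint, cfc_id_of_isHermitian hρ, Matrix.one_mul] at hmul
  simpa only [one_mul] using hmul

theorem doubleSpectralSum_congr {F G : ℝ × ℝ → ℝ}
    (h : ∀ x ∈ spectrum ℝ σ, ∀ y ∈ spectrum ℝ ρ, F (x, y) = G (x, y)) :
    doubleSpectralSum σ ρ F = doubleSpectralSum σ ρ G := by
  refine Finset.sum_congr rfl fun p hp => ?_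
  obtain ⟨hx, hy⟩ := Finset.mem_product.mp hp
  rw [h _ (mem_realSpectrum.mp hx) _ (mem_realSpectrum.mp hy)]

theorem div_nonneg_of_mem_realSpectrum (hσ : σ.PosSemidef) (hρ : ρ.PosSemidef) {p : ℝ × ℝ}
    (hp : p ∈ realSpectrum σ ×ˢ realSpectrum ρ) : 0 ≤ p.1 / p.2 := by
  obtain ⟨hx, hy⟩ := Finset.mem_product.mp hp
  exact div_nonneg (spectrum_real_nonneg hσ (mem_realSpectrum.mp hx))
    (spectrum_real_nonneg hρ (mem_realSpectrum.mp hy))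

/-- The function `φ` of the relative modular operator `X ↦ σ X ρ⁻¹`, applied to the support
projection of `ρ`. The junk values of `x / y` at eigenvalues `y = 0` of `ρ` do not contribute. -/
noncomputable def modularCalc (σ ρ : Matrix n n ℂ) : (ℝ → ℝ) →ₗ[ℝ] Matrix n n ℂ where
  toFun φ := doubleSpectralSum σ ρ fun p => if p.2 = 0 then 0 else φ (p.1 / p.2)
  map_add' φ ψ := by
    rw [← map_add]
    congr 1
    funext p
    simp only [Pi.add_apply]
    split_ifs <;> simp
  map_smul' c φ := by
    rw [RingHom.id_apply, ← map_smul]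
    congr 1
    funext p
    simp

theorem modularCalc_apply (σ ρ : Matrix n n ℂ) (φ : ℝ → ℝ) :
    modularCalc σ ρ φ = doubleSpectralSum σ ρ fun p => if p.2 = 0 then 0 else φ (p.1 / p.2) :=
  rfl

theorem modularCalc_congr {φ ψ : ℝ → ℝ}
    (h : ∀ x ∈ spectrum ℝ σ, ∀ y ∈ spectrum ℝ ρ, φ (x / y) = ψ (x / y)) :
    modularCalc σ ρ φ = modularCalc σ ρ ψ :=
  doubleSpectralSum_congr fun x hx y hy => by simp only [h x hx y hy]

theorem modularCalc_mul_suppProj (σ ρ : Matrix n n ℂ) (φ : ℝ → ℝ) :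
    modularCalc σ ρ φ * suppProj ρ = modularCalc σ ρ φ := by
  rw [modularCalc_apply, suppProj, doubleSpectralSum_mul_cfc]
  refine doubleSpectralSum_congr fun x _ y _ => ?_
  split_ifs <;> simp

theorem modularCalc_sqrt (hσ : σ.PosSemidef) (ρ : Matrix n n ℂ) :
    modularCalc σ ρ Real.sqrt = cfc Real.sqrt σ * cfc (fun y => (Real.sqrt y)⁻¹) ρ := by
  rw [← doubleSpectralSum_mul_mul]
  refine doubleSpectralSum_congr fun x hx y _ => ?_
  split_ifs with hy
  · simp [show y = 0 from hy]
  · rw [Real.sqrt_div (spectrum_real_nonneg hσ hx), div_eq_mul_inv]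

/-- The resolvent of the relative modular operator at `-t`, applied to the support projection of
`ρ`. -/
noncomputable def modularResolvent (σ ρ : Matrix n n ℂ) (t : ℝ) : Matrix n n ℂ :=
  modularCalc σ ρ fun x => (x + t)⁻¹

theorem mul_modularResolvent_add (hσ : σ.PosSemidef) (hρ : ρ.PosSemidef) {t : ℝ} (ht : 0 < t) :
    σ * modularResolvent σ ρ t + t • (modularResolvent σ ρ t * ρ) = ρ := by
  rw [modularResolvent, modularCalc_apply, mul_doubleSpectralSum hσ.isHermitian,
    doubleSpectralSum_mul σ hρ.isHermitian, ← map_smul, ← map_add]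
  refine (doubleSpectralSum_congr fun x hx y hy => ?_).trans
    (doubleSpectralSum_snd hσ.isHermitian hρ.isHermitian)
  have hx := spectrum_real_nonneg hσ hx
  rcases (spectrum_real_nonneg hρ hy).eq_or_lt with rfl | hy
  · simp
  · simp only [Pi.add_apply, Pi.smul_apply, if_neg hy.ne', smul_eq_mul]
    field_simp

theorem modularCalc_eq_sum_modularResolvent {ι : Type*} {φ : ℝ → ℝ} (s : Finset ι) {c t : ι → ℝ}
    (h : ∀ p ∈ realSpectrum σ ×ˢ realSpectrum ρ, φ (p.1 / p.2) =
      ∑ j ∈ s, c j * (p.1 / p.2 + t j)⁻¹) :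
    modularCalc σ ρ φ = ∑ j ∈ s, c j • modularResolvent σ ρ (t j) := by
  simp only [modularResolvent, ← map_smul, ← map_sum]
  refine modularCalc_congr fun x hx y hy => ?_
  rw [h (x, y) (Finset.mem_product.mpr ⟨mem_realSpectrum.mpr hx, mem_realSpectrum.mpr hy⟩)]
  simp only [Finset.sum_apply, Pi.smul_apply, smul_eq_mul]

/-- The weight `y Tr(E_x F_y)` of `p = (x, y)` in the joint spectral measure of `σ` and `ρ`,
evaluated at the vector `ρ^{1/2}`. -/
noncomputable def modularWeight (σ ρ : Matrix n n ℂ) (p : ℝ × ℝ) : ℝ :=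
  p.2 * (spectralProj σ p.1 * spectralProj ρ p.2).trace.re

theorem re_trace_doubleSpectralSum_mul_snd (σ ρ : Matrix n n ℂ) (F : ℝ × ℝ → ℝ) :
    (doubleSpectralSum σ ρ fun p => F p * p.2).trace.re =
      ∑ p ∈ realSpectrum σ ×ˢ realSpectrum ρ, modularWeight σ ρ p * F p := by
  simp only [doubleSpectralSum_apply, trace_sum, trace_smul, Complex.re_sum, Complex.smul_re,
    modularWeight, smul_eq_mul]
  exact Finset.sum_congr rfl fun p _ => by ring

theorem sum_modularWeight (hσ : σ.IsHermitian) (hρ : ρ.IsHermitian) :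
    ∑ p ∈ realSpectrum σ ×ˢ realSpectrum ρ, modularWeight σ ρ p = ρ.trace.re := by
  simpa only [mul_one, one_mul, doubleSpectralSum_snd hσ hρ] using
    (re_trace_doubleSpectralSum_mul_snd σ ρ fun _ => 1).symm

theorem re_trace_modularResolvent_mul (σ : Matrix n n ℂ) (hρ : ρ.IsHermitian) (t : ℝ) :
    (modularResolvent σ ρ t * ρ).trace.re =
      ∑ p ∈ realSpectrum σ ×ˢ realSpectrum ρ, modularWeight σ ρ p * (p.1 / p.2 + t)⁻¹ := by
  rw [modularResolvent, modularCalc_apply, doubleSpectralSum_mul σ hρ,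
    ← re_trace_doubleSpectralSum_mul_snd]
  congr 3
  funext p
  split_ifs with hp <;> simp [hp]

theorem modularWeight_eq_zero (hρ : ρ.IsHermitian) (hsupp : suppProj σ * ρ = ρ) {p : ℝ × ℝ}
    (hp : p.1 / p.2 = 0) : modularWeight σ ρ p = 0 := by
  rcases div_eq_zero_iff.mp hp with hx | hy
  · have hker : spectralProj σ p.1 * ρ = 0 := by
      rw [← hsupp, ← Matrix.mul_assoc, suppProj, spectralProj_mul_cfc, if_pos hx, zero_smul,
        Matrix.zero_mul]
    have hmul : p.2 • (spectralProj σ p.1 * spectralProj ρ p.2) = 0 := by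
      have h := cfc_mul_spectralProj (fun y => y) ρ p.2
      rw [cfc_id_of_isHermitian hρ] at h
      rw [← Matrix.mul_smul, ← h, ← Matrix.mul_assoc, hker, Matrix.zero_mul]
    rw [modularWeight, ← smul_eq_mul, ← Complex.smul_re, ← trace_smul, hmul, trace_zero,
      Complex.zero_re]
  · rw [modularWeight, hy, zero_mul]

/-- The quantum relative entropy `D(ρ ‖ σ)` in natural units; meaningful when the support of `ρ` is
contained in that of `σ`. -/
noncomputable def relEntropy (ρ σ : Matrix n n ℂ) : ℝ :=
  (ρ * cfc Real.log ρ).trace.re - (cfc Real.log σ * ρ).trace.re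

theorem sum_modularWeight_mul_log (hσ : σ.IsHermitian) (hρ : ρ.IsHermitian)
    (hsupp : suppProj σ * ρ = ρ) :
    ∑ p ∈ realSpectrum σ ×ˢ realSpectrum ρ, modularWeight σ ρ p * Real.log (p.1 / p.2) =
      -relEntropy ρ σ := by
  have hlog : ∀ p, modularWeight σ ρ p * Real.log (p.1 / p.2) =
      modularWeight σ ρ p * Real.log p.1 - modularWeight σ ρ p * Real.log p.2 := by
    intro p
    by_cases hp : p.1 / p.2 = 0
    · simp only [modularWeight_eq_zero hρ hsupp hp, zero_mul, sub_zero]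
    · obtain ⟨hx, hy⟩ := div_ne_zero_iff.mp hp
      rw [Real.log_div hx hy, mul_sub]
  have hσlog : (doubleSpectralSum σ ρ fun p => Real.log p.1 * p.2) = cfc Real.log σ * ρ := by
    rw [doubleSpectralSum_mul_mul σ ρ Real.log fun y => y, cfc_id_of_isHermitian hρ]
  have hρlog : (doubleSpectralSum σ ρ fun p => Real.log p.2 * p.2) = ρ * cfc Real.log ρ := by
    nth_rw 2 [← doubleSpectralSum_snd hσ hρ]
    simp only [doubleSpectralSum_mul_cfc, mul_comm]
  simp only [hlog, Finset.sum_sub_distrib]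
  rw [← re_trace_doubleSpectralSum_mul_snd, ← re_trace_doubleSpectralSum_mul_snd, hσlog, hρlog,
    relEntropy, neg_sub]

end RelativeModular

section Variational

variable {n : Type*} [Fintype n] {σ ρ R : Matrix n n ℂ} {t : ℝ}

/-- The concave quadratic functional whose maximum is the resolvent form
`⟨ρ^{1/2}, (Δ + t)⁻¹ ρ^{1/2}⟩` of the relative modular operator `Δ`. -/
noncomputable def resolventFunctional (σ ρ : Matrix n n ℂ) (t : ℝ) (X : Matrix n n ℂ) : ℝ :=
  2 * (Xᴴ * ρ).trace.re - (Xᴴ * σ * X).trace.re - t * (X * ρ * Xᴴ).trace.re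

theorem resolventFunctional_eq_sub (hσ : σ.IsHermitian) (hρ : ρ.IsHermitian)
    (hR : σ * R + t • (R * ρ) = ρ) (X : Matrix n n ℂ) :
    resolventFunctional σ ρ t X = (R * ρ).trace.re - ((X - R)ᴴ * σ * (X - R)).trace.re
      - t * ((X - R) * ρ * (X - R)ᴴ).trace.re := by
  have hpair : ∀ Y : Matrix n n ℂ,
      (Yᴴ * ρ).trace.re = (Yᴴ * σ * R).trace.re + t * (R * ρ * Yᴴ).trace.re := by
    intro Y
    nth_rw 1 [← hR]
    rw [Matrix.mul_add, Matrix.mul_smul, trace_add, trace_smul, trace_mul_comm Yᴴ (R * ρ),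
      Complex.add_re, Complex.smul_re, smul_eq_mul, Matrix.mul_assoc Yᴴ]
  have hre : ∀ Z : Matrix n n ℂ, Zᴴ.trace.re = Z.trace.re := fun Z => by
    rw [trace_conjTranspose, Complex.star_def, Complex.conj_re]
  have hσR : (Rᴴ * σ * X).trace.re = (Xᴴ * σ * R).trace.re := by
    rw [← hre]
    simp only [conjTranspose_mul, conjTranspose_conjTranspose, hσ.eq, Matrix.mul_assoc]
  have hρR : (X * ρ * Rᴴ).trace.re = (R * ρ * Xᴴ).trace.re := by
    rw [← hre]
    simp only [conjTranspose_mul, conjTranspose_conjTranspose, hρ.eq, Matrix.mul_assoc]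
  have hself : (R * ρ).trace.re = (Rᴴ * ρ).trace.re := by
    rw [← hre, conjTranspose_mul, hρ.eq, trace_mul_comm]
  rw [resolventFunctional, hself, hpair X, hpair R]
  simp only [conjTranspose_sub, Matrix.sub_mul, Matrix.mul_sub, trace_sub, Complex.sub_re, hσR, hρR]
  ring

theorem resolventFunctional_le (hσ : σ.PosSemidef) (hρ : ρ.PosSemidef) (ht : 0 < t)
    (hR : σ * R + t • (R * ρ) = ρ) (X : Matrix n n ℂ) :
    resolventFunctional σ ρ t X ≤ (R * ρ).trace.re := by
  rw [resolventFunctional_eq_sub hσ.isHermitian hρ.isHermitian hR, sub_sub]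
  refine sub_le_self _ (add_nonneg ?_ (mul_nonneg ht.le ?_))
  · exact (Complex.le_def.mp (hσ.conjTranspose_mul_mul_same (X - R)).trace_nonneg).1
  · exact (Complex.le_def.mp (hρ.mul_mul_conjTranspose_same (X - R)).trace_nonneg).1

theorem resolventFunctional_self (hσ : σ.IsHermitian) (hρ : ρ.IsHermitian)
    (hR : σ * R + t • (R * ρ) = ρ) :
    resolventFunctional σ ρ t R = (R * ρ).trace.re := by
  simp [resolventFunctional_eq_sub hσ hρ hR]

theorem mul_eq_of_resolventFunctional_eq (hσ : σ.PosSemidef) (hρ : ρ.PosSemidef) (ht : 0 < t)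
    (hR : σ * R + t • (R * ρ) = ρ) {X : Matrix n n ℂ}
    (hX : resolventFunctional σ ρ t X = (R * ρ).trace.re) : X * ρ = R * ρ := by
  have hσ_nonneg := (Complex.le_def.mp (hσ.conjTranspose_mul_mul_same (X - R)).trace_nonneg).1
  have hρ_nonneg := Complex.le_def.mp (hρ.mul_mul_conjTranspose_same (X - R)).trace_nonneg
  rw [resolventFunctional_eq_sub hσ.isHermitian hρ.isHermitian hR] at hX
  have hgap : ((X - R) * ρ * (X - R)ᴴ).trace.re = 0 := by
    simp only [Complex.zero_re] at hσ_nonneg hρ_nonneg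
    nlinarith [hρ_nonneg.1]
  have hzero := mul_eq_zero_of_trace_mul_mul_conjTranspose hρ
    (Complex.ext hgap hρ_nonneg.2.symm)
  rwa [Matrix.sub_mul, sub_eq_zero] at hzero

end Variational

/-! ### Equality in data processing and Petz recovery -/

section DataProcessing

variable {n m : Type*} [Fintype n] [DecidableEq n] [Fintype m] [DecidableEq m]
  {Φ : Matrix m m ℂ →⋆ₐ[ℂ] Matrix n n ℂ} {σ ρ : Matrix n n ℂ} {σ' ρ' : Matrix m m ℂ}

/-- `ρ'` is the reduction of `ρ` to the subsystem whose observables are embedded by `Φ`. -/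
def IsReduction (Φ : Matrix m m ℂ →⋆ₐ[ℂ] Matrix n n ℂ) (ρ : Matrix n n ℂ) (ρ' : Matrix m m ℂ) :
    Prop :=
  ∀ X, (Φ X * ρ).trace = (X * ρ').trace

theorem IsReduction.trace_eq (h : IsReduction Φ ρ ρ') : ρ.trace = ρ'.trace := by
  simpa only [map_one, Matrix.one_mul] using h 1

theorem IsReduction.map_suppProj_mul (h : IsReduction Φ ρ ρ') (hρ : ρ.PosSemidef)
    (hρ' : ρ'.IsHermitian) : Φ (suppProj ρ') * ρ = ρ := by
  have hadj : (Φ (1 - suppProj ρ'))ᴴ = Φ (1 - suppProj ρ') := by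
    rw [← star_eq_conjTranspose, ← map_star, star_eq_conjTranspose, conjTranspose_sub,
      conjTranspose_one, isHermitian_suppProj]
  have hzero : Φ (1 - suppProj ρ') * ρ = 0 := by
    apply mul_eq_zero_of_trace_mul_mul_conjTranspose hρ
    rw [hadj, trace_mul_cycle, ← map_mul, h]
    simp [Matrix.sub_mul, Matrix.mul_sub, suppProj_mul_suppProj, suppProj_mul_self hρ']
  rw [map_sub, map_one, Matrix.sub_mul, Matrix.one_mul, sub_eq_zero] at hzero
  exact hzero.symm

theorem resolventFunctional_map (hσ : IsReduction Φ σ σ') (hρ : IsReduction Φ ρ ρ') (t : ℝ)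
    (X : Matrix m m ℂ) :
    resolventFunctional σ ρ t (Φ X) = resolventFunctional σ' ρ' t X := by
  have hlin : ((Φ X)ᴴ * ρ).trace = (Xᴴ * ρ').trace := by
    rw [← star_eq_conjTranspose, ← map_star, hρ, star_eq_conjTranspose]
  have hleft : ((Φ X)ᴴ * σ * Φ X).trace = (Xᴴ * σ' * X).trace := by
    rw [trace_mul_cycle, trace_mul_cycle Xᴴ, ← star_eq_conjTranspose, ← map_star, ← map_mul, hσ,
      star_eq_conjTranspose]
  have hright : (Φ X * ρ * (Φ X)ᴴ).trace = (X * ρ' * Xᴴ).trace := by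
    rw [trace_mul_cycle, trace_mul_cycle X, ← star_eq_conjTranspose, ← map_star, ← map_mul, hρ,
      star_eq_conjTranspose]
  rw [resolventFunctional, resolventFunctional, hlin, hleft, hright]

/-- Equality in the data processing inequality: the pair `(ρ', σ')` is a reduction of the pair
`(ρ, σ)` with the same relative entropy, all supports being nested. -/
structure IsSufficientReduction (Φ : Matrix m m ℂ →⋆ₐ[ℂ] Matrix n n ℂ) (σ ρ : Matrix n n ℂ)
    (σ' ρ' : Matrix m m ℂ) : Prop where
  posSemidef_left : σ.PosSemidef
  posSemidef_right : ρ.PosSemidef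
  posSemidef_left' : σ'.PosSemidef
  posSemidef_right' : ρ'.PosSemidef
  reduction_left : IsReduction Φ σ σ'
  reduction_right : IsReduction Φ ρ ρ'
  supp : suppProj σ * ρ = ρ
  supp' : suppProj σ' * ρ' = ρ'
  relEntropy_eq : relEntropy ρ σ = relEntropy ρ' σ'

namespace IsSufficientReduction

theorem resolventForm_le (h : IsSufficientReduction Φ σ ρ σ' ρ') {t : ℝ} (ht : 0 < t) :
    (modularResolvent σ' ρ' t * ρ').trace.re ≤ (modularResolvent σ ρ t * ρ).trace.re := by
  rw [← resolventFunctional_self h.posSemidef_left'.isHermitian h.posSemidef_right'.isHermitian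
      (mul_modularResolvent_add h.posSemidef_left' h.posSemidef_right' ht),
    ← resolventFunctional_map h.reduction_left h.reduction_right]
  exact resolventFunctional_le h.posSemidef_left h.posSemidef_right ht
    (mul_modularResolvent_add h.posSemidef_left h.posSemidef_right ht) _

-- The relative entropy is an integral of the resolvent forms over `t > 0`, so comparable forms
-- with equal integrals coincide.
theorem resolventForm_eq (h : IsSufficientReduction Φ σ ρ σ' ρ') {t : ℝ} (ht : 0 < t) :
    (modularResolvent σ' ρ' t * ρ').trace.re = (modularResolvent σ ρ t * ρ).trace.re := by
  have hρ := h.posSemidef_right.isHermitian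
  have hρ' := h.posSemidef_right'.isHermitian
  rw [re_trace_modularResolvent_mul σ hρ, re_trace_modularResolvent_mul σ' hρ']
  refine sum_mul_inv_add_eq_of_sum_mul_log_eq
    (fun p hp => div_nonneg_of_mem_realSpectrum h.posSemidef_left h.posSemidef_right hp)
    (fun p _ => modularWeight_eq_zero hρ h.supp)
    (fun p hp => div_nonneg_of_mem_realSpectrum h.posSemidef_left' h.posSemidef_right' hp)
    (fun p _ => modularWeight_eq_zero hρ' h.supp') ?_ ?_ (fun u hu => ?_) ht
  · rw [sum_modularWeight h.posSemidef_left.isHermitian hρ,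
      sum_modularWeight h.posSemidef_left'.isHermitian hρ', h.reduction_right.trace_eq]
  · rw [sum_modularWeight_mul_log h.posSemidef_left.isHermitian hρ h.supp,
      sum_modularWeight_mul_log h.posSemidef_left'.isHermitian hρ' h.supp', h.relEntropy_eq]
  · rw [← re_trace_modularResolvent_mul σ hρ, ← re_trace_modularResolvent_mul σ' hρ']
    exact h.resolventForm_le hu

theorem map_modularResolvent_mul_suppProj (h : IsSufficientReduction Φ σ ρ σ' ρ') {t : ℝ}
    (ht : 0 < t) :
    Φ (modularResolvent σ' ρ' t) * suppProj ρ = modularResolvent σ ρ t := by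
  have hmax : resolventFunctional σ ρ t (Φ (modularResolvent σ' ρ' t)) =
      (modularResolvent σ ρ t * ρ).trace.re := by
    rw [resolventFunctional_map h.reduction_left h.reduction_right,
      resolventFunctional_self h.posSemidef_left'.isHermitian h.posSemidef_right'.isHermitian
        (mul_modularResolvent_add h.posSemidef_left' h.posSemidef_right' ht),
      h.resolventForm_eq ht]
  have hmul := mul_eq_of_resolventFunctional_eq h.posSemidef_left h.posSemidef_right ht
    (mul_modularResolvent_add h.posSemidef_left h.posSemidef_right ht) hmax
  have hsub := mul_suppProj_eq_zero h.posSemidef_right.isHermitian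
    (D := Φ (modularResolvent σ' ρ' t) - modularResolvent σ ρ t)
    (by rw [Matrix.sub_mul, hmul, sub_self])
  rwa [Matrix.sub_mul, sub_eq_zero, modularResolvent, modularResolvent,
    modularCalc_mul_suppProj] at hsub

theorem map_modularCalc_mul_suppProj (h : IsSufficientReduction Φ σ ρ σ' ρ') (φ : ℝ → ℝ) :
    Φ (modularCalc σ' ρ' φ) * suppProj ρ = modularCalc σ ρ φ := by
  let ratios := (realSpectrum σ ×ˢ realSpectrum ρ).image (fun p => p.1 / p.2)
  let ratios' := (realSpectrum σ' ×ˢ realSpectrum ρ').image fun p => p.1 / p.2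
  have hnonneg : ∀ x ∈ ratios ∪ ratios', 0 ≤ x := by
    simp only [ratios, ratios', Finset.mem_union, Finset.mem_image]
    rintro _ (⟨p, hp, rfl⟩ | ⟨p, hp, rfl⟩)
    exacts [div_nonneg_of_mem_realSpectrum h.posSemidef_left h.posSemidef_right hp,
      div_nonneg_of_mem_realSpectrum h.posSemidef_left' h.posSemidef_right' hp]
  obtain ⟨c, hc⟩ := exists_eq_sum_mul_inv_add (ratios ∪ ratios') hnonneg φ
  rw [modularCalc_eq_sum_modularResolvent _ fun p hp =>
      hc _ (Finset.mem_union_left _ (Finset.mem_image_of_mem _ hp)),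
    modularCalc_eq_sum_modularResolvent _ fun p hp =>
      hc _ (Finset.mem_union_right _ (Finset.mem_image_of_mem _ hp)),
    map_sum, Finset.sum_mul]
  refine Finset.sum_congr rfl fun j _ => ?_
  rw [← h.map_modularResolvent_mul_suppProj (by positivity), ← Matrix.smul_mul]
  congr 1
  exact map_real_smul Φ (LinearMap.continuous_of_finiteDimensional Φ.toAlgHom.toLinearMap) _ _

theorem cfc_sqrt_mul_suppProj (h : IsSufficientReduction Φ σ ρ σ' ρ') :
    cfc Real.sqrt σ * suppProj ρ =
      Φ (cfc Real.sqrt σ' * cfc (fun x => (Real.sqrt x)⁻¹) ρ') * cfc Real.sqrt ρ := by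
  have hmodular := h.map_modularCalc_mul_suppProj Real.sqrt
  rw [modularCalc_sqrt h.posSemidef_left, modularCalc_sqrt h.posSemidef_left'] at hmodular
  rw [← suppProj_mul_cfc ρ Real.sqrt_zero, ← Matrix.mul_assoc, hmodular, Matrix.mul_assoc,
    cfc_commute_cfc (fun x => (Real.sqrt x)⁻¹), cfc_sqrt_mul_cfc_inv_sqrt h.posSemidef_right]

theorem map_sqrt_mul_inv_sqrt_mul_sqrt (h : IsSufficientReduction Φ σ ρ σ' ρ') :
    Φ (cfc Real.sqrt ρ' * cfc (fun x => (Real.sqrt x)⁻¹) σ') * cfc Real.sqrt σ =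
      cfc Real.sqrt ρ := by
  refine eq_of_mul_eq_of_trace_mul_conjTranspose_eq (isHermitian_suppProj ρ)
    (suppProj_mul_suppProj ρ) ?_ ?_
  · have hcancel : cfc Real.sqrt ρ' * cfc (fun x => (Real.sqrt x)⁻¹) σ' *
        (cfc Real.sqrt σ' * cfc (fun x => (Real.sqrt x)⁻¹) ρ') = suppProj ρ' := by
      have hsupp := congrArg conjTranspose
        (mul_cfc_sqrt_of_mul_eq h.posSemidef_right'.isHermitian h.supp')
      rw [conjTranspose_mul, isHermitian_cfc, isHermitian_suppProj] at hsupp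
      rw [Matrix.mul_assoc, ← Matrix.mul_assoc (cfc _ σ'), cfc_commute_cfc _ _ σ',
        cfc_sqrt_mul_cfc_inv_sqrt h.posSemidef_left', ← Matrix.mul_assoc, hsupp,
        cfc_sqrt_mul_cfc_inv_sqrt h.posSemidef_right']
    rw [Matrix.mul_assoc, h.cfc_sqrt_mul_suppProj, ← Matrix.mul_assoc, ← map_mul, hcancel]
    exact mul_cfc_sqrt_of_mul_eq h.posSemidef_right.isHermitian
      (h.reduction_right.map_suppProj_mul h.posSemidef_right h.posSemidef_right'.isHermitian)
  · set invSqrt := cfc (fun x => (Real.sqrt x)⁻¹) σ'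
    calc (Φ (cfc Real.sqrt ρ' * invSqrt) * cfc Real.sqrt σ *
            (Φ (cfc Real.sqrt ρ' * invSqrt) * cfc Real.sqrt σ)ᴴ).trace
        = (Φ (invSqrt * ρ' * invSqrt) * σ).trace := by
          rw [conjTranspose_mul, isHermitian_cfc, ← star_eq_conjTranspose (Φ _), ← map_star,
            star_eq_conjTranspose, conjTranspose_mul, isHermitian_cfc, isHermitian_cfc,
            ← Matrix.mul_assoc, Matrix.mul_assoc (Φ _), cfc_sqrt_mul_self h.posSemidef_left,
            trace_mul_cycle, ← map_mul, Matrix.mul_assoc, ← Matrix.mul_assoc _ _ invSqrt,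
            cfc_sqrt_mul_self h.posSemidef_right', Matrix.mul_assoc]
      _ = (suppProj σ' * ρ').trace := by
          rw [h.reduction_left, ← cfc_inv_sqrt_mul_mul_cfc_inv_sqrt h.posSemidef_left',
            Matrix.mul_assoc, trace_mul_cycle]
      _ = (cfc Real.sqrt ρ * (cfc Real.sqrt ρ)ᴴ).trace := by
          rw [h.supp', ← h.reduction_right.trace_eq, isHermitian_cfc,
            cfc_sqrt_mul_self h.posSemidef_right]

theorem petz_recovery (h : IsSufficientReduction Φ σ ρ σ' ρ') :
    ρ = cfc Real.sqrt σ * Φ (cfc (fun x => (Real.sqrt x)⁻¹) σ' * ρ' *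
      cfc (fun x => (Real.sqrt x)⁻¹) σ') * cfc Real.sqrt σ := by
  have hsqrt := h.map_sqrt_mul_inv_sqrt_mul_sqrt
  have hadj := congrArg conjTranspose hsqrt
  rw [conjTranspose_mul, isHermitian_cfc, isHermitian_cfc, ← star_eq_conjTranspose,
    ← map_star, star_eq_conjTranspose, conjTranspose_mul, isHermitian_cfc, isHermitian_cfc] at hadj
  rw [← cfc_sqrt_mul_self h.posSemidef_right']
  nth_rw 1 [← cfc_sqrt_mul_self h.posSemidef_right]
  nth_rw 1 [← hadj]
  rw [← hsqrt]
  simp only [map_mul, Matrix.mul_assoc]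

end IsSufficientReduction

end DataProcessing

/-! ### Partial traces and saturation of strong subadditivity -/

section PartialTrace

variable {X Z Y : Type*} [Fintype Z]

/-- The partial trace over `Z` on a space whose basis `Y` is identified with `X × Z` along `e`. -/
def partialTrace (e : Y ≃ X × Z) (ρ : Matrix Y Y ℂ) : Matrix X X ℂ :=
  Matrix.of fun x x' => ∑ z, ρ (e.symm (x, z)) (e.symm (x', z))

theorem partialTrace_apply (e : Y ≃ X × Z) (ρ : Matrix Y Y ℂ) (x x' : X) :
    partialTrace e ρ x x' = ∑ z, ρ (e.symm (x, z)) (e.symm (x', z)) :=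
  rfl

theorem posSemidef_partialTrace (e : Y ≃ X × Z) {ρ : Matrix Y Y ℂ} (hρ : ρ.PosSemidef) :
    (partialTrace e ρ).PosSemidef := by
  have hsum : partialTrace e ρ =
      ∑ z, ρ.submatrix (fun x => e.symm (x, z)) fun x => e.symm (x, z) := by
    ext x x'
    rw [Matrix.sum_apply]
    rfl
  rw [hsum]
  exact posSemidef_sum _ fun z _ => hρ.submatrix _

variable [DecidableEq Z] [Fintype X] [DecidableEq X] [Fintype Y] [DecidableEq Y]

/-- The ampliation `M ↦ M ⊗ 1` to a space whose basis `Y` is identified with `X × Z` along `e`. -/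
def ampliation (e : Y ≃ X × Z) : Matrix X X ℂ →⋆ₐ[ℂ] Matrix Y Y ℂ where
  toFun M := (kronecker M (1 : Matrix Z Z ℂ)).submatrix e e
  map_one' := by rw [kronecker, one_kronecker_one, submatrix_one_equiv]
  map_mul' M N := by
    simp only [submatrix_mul_equiv, kronecker, ← mul_kronecker_mul, Matrix.one_mul]
  map_zero' := by ext; simp [kronecker]
  map_add' M N := by ext; simp [kronecker, add_mul]
  commutes' c := by
    ext i j
    simp [kronecker, Algebra.algebraMap_eq_smul_one, smul_kronecker, one_apply]
  map_star' M := by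
    simp only [star_eq_conjTranspose, conjTranspose_submatrix, kronecker, conjTranspose_kronecker,
      conjTranspose_one]

theorem ampliation_apply (e : Y ≃ X × Z) (M : Matrix X X ℂ) (y y' : Y) :
    ampliation e M y y' = M (e y).1 (e y').1 * (1 : Matrix Z Z ℂ) (e y).2 (e y').2 :=
  rfl

theorem isReduction_partialTrace (e : Y ≃ X × Z) (ρ : Matrix Y Y ℂ) :
    IsReduction (ampliation e) ρ (partialTrace e ρ) := by
  intro M
  simp only [trace, diag_apply, mul_apply, partialTrace_apply, Finset.mul_sum]
  rw [← Equiv.sum_comp e.symm, Fintype.sum_prod_type]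
  refine Finset.sum_congr rfl fun x _ => ?_
  rw [Finset.sum_comm (f := fun _ _ => M _ _ * _)]
  refine Finset.sum_congr rfl fun z _ => ?_
  rw [← Equiv.sum_comp e.symm, Fintype.sum_prod_type]
  simp [ampliation_apply, one_apply]

theorem posSemidef_ampliation (e : Y ≃ X × Z) {M : Matrix X X ℂ} (hM : M.PosSemidef) :
    (ampliation e M).PosSemidef :=
  (hM.kronecker PosSemidef.one).submatrix e

theorem suppProj_ampliation_partialTrace_mul (e : Y ≃ X × Z) {ρ : Matrix Y Y ℂ}
    (hρ : ρ.PosSemidef) : suppProj (ampliation e (partialTrace e ρ)) * ρ = ρ := by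
  have hρ' := (posSemidef_partialTrace e hρ).isHermitian
  rw [suppProj, ← map_cfc _ hρ']
  exact (isReduction_partialTrace e ρ).map_suppProj_mul hρ hρ'

theorem relEntropy_ampliation_partialTrace (e : Y ≃ X × Z) {ρ : Matrix Y Y ℂ}
    (hρ : ρ.PosSemidef) :
    relEntropy ρ (ampliation e (partialTrace e ρ)) =
      (vNEntropy (partialTrace e ρ) - vNEntropy ρ) * Real.log 2 := by
  have hρ' := (posSemidef_partialTrace e hρ).isHermitian
  rw [relEntropy, ← map_cfc _ hρ', isReduction_partialTrace e ρ, sub_mul,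
    vNEntropy_mul_log_two hρ', vNEntropy_mul_log_two hρ.isHermitian, trace_mul_comm (cfc _ _)]
  ring

end PartialTrace

section Saturation

variable {A B C : Type*} [Fintype A] [Fintype B] [DecidableEq B] [Fintype C]
  {ρ : Matrix (A × B × C) (A × B × C) ℂ}

/-- The marginal `ρ_AB`. -/
abbrev marginalAB (ρ : Matrix (A × B × C) (A × B × C) ℂ) : Matrix (A × B) (A × B) ℂ :=
  partialTrace (Equiv.prodAssoc A B C).symm ρ

/-- The marginal `ρ_BC`. -/
abbrev marginalBC (ρ : Matrix (A × B × C) (A × B × C) ℂ) : Matrix (B × C) (B × C) ℂ :=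
  partialTrace (Equiv.prodComm A (B × C)) ρ

/-- The marginal `ρ_B`. -/
abbrev marginalB (ρ : Matrix (A × B × C) (A × B × C) ℂ) : Matrix B B ℂ :=
  partialTrace (Equiv.refl (B × C)) (marginalBC ρ)

theorem S3B_eq_vNEntropy_marginalB : S3B ρ = vNEntropy (marginalB ρ) := by
  rw [S3B]
  congr 1
  ext b b'
  exact Finset.sum_comm

variable [DecidableEq A] [DecidableEq C]

theorem partialTrace_ampliation_marginalAB (ρ : Matrix (A × B × C) (A × B × C) ℂ) :
    partialTrace (Equiv.prodComm A (B × C))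
        (ampliation (Equiv.prodAssoc A B C).symm (marginalAB ρ)) =
      ampliation (Equiv.refl (B × C)) (marginalB ρ) := by
  ext ⟨b, c⟩ ⟨b', c'⟩
  simp only [partialTrace_apply, ampliation_apply, Finset.sum_mul]
  exact Finset.sum_comm

theorem isSufficientReduction_of_saturation (hρ : ρ.PosSemidef)
    (hsat : S3AB ρ + S3BC ρ = S3ABC ρ + S3B ρ) :
    IsSufficientReduction (ampliation (Equiv.prodComm A (B × C)))
      (ampliation (Equiv.prodAssoc A B C).symm (marginalAB ρ)) ρ
      (ampliation (Equiv.refl (B × C)) (marginalB ρ)) (marginalBC ρ) where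
  posSemidef_left := posSemidef_ampliation _ (posSemidef_partialTrace _ hρ)
  posSemidef_right := hρ
  posSemidef_left' :=
    posSemidef_ampliation _ (posSemidef_partialTrace _ (posSemidef_partialTrace _ hρ))
  posSemidef_right' := posSemidef_partialTrace _ hρ
  reduction_left := partialTrace_ampliation_marginalAB ρ ▸ isReduction_partialTrace _ _
  reduction_right := isReduction_partialTrace _ ρ
  supp := suppProj_ampliation_partialTrace_mul _ hρ
  supp' := suppProj_ampliation_partialTrace_mul _ (posSemidef_partialTrace _ hρ)
  relEntropy_eq := by
    rw [relEntropy_ampliation_partialTrace _ hρ,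
      relEntropy_ampliation_partialTrace _ (posSemidef_partialTrace _ hρ),
      ← S3B_eq_vNEntropy_marginalB]
    congr 1
    change S3AB ρ - S3ABC ρ = S3B ρ - S3BC ρ
    linarith

theorem eq_sqrt_marginalAB_mul_of_saturation (hρ : ρ.PosSemidef)
    (hsat : S3AB ρ + S3BC ρ = S3ABC ρ + S3B ρ) :
    ρ = ampliation (Equiv.prodAssoc A B C).symm (cfc Real.sqrt (marginalAB ρ)) *
      ampliation (Equiv.prodComm A (B × C))
        (ampliation (Equiv.refl (B × C)) (cfc (fun x => (Real.sqrt x)⁻¹) (marginalB ρ)) *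
          marginalBC ρ *
          ampliation (Equiv.refl (B × C)) (cfc (fun x => (Real.sqrt x)⁻¹) (marginalB ρ))) *
      ampliation (Equiv.prodAssoc A B C).symm (cfc Real.sqrt (marginalAB ρ)) := by
  have hB := posSemidef_partialTrace (Equiv.refl (B × C)) (posSemidef_partialTrace
    (Equiv.prodComm A (B × C)) hρ)
  rw [map_cfc _ (posSemidef_partialTrace _ hρ).isHermitian, map_cfc _ hB.isHermitian]
  exact (isSufficientReduction_of_saturation hρ hsat).petz_recovery

end Saturation

/-! ### Fixed points of a unital completely positive map -/

section FixedPoints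

variable {n ι : Type*} [Fintype n] [Fintype ι] {a : ι → Matrix n n ℂ} {τ : ι ≃ ι}
  {b y : Matrix n n ℂ}

theorem eq_zero_of_sum_trace_conjTranspose_mul_self {m n ι : Type*} [Fintype m] [Fintype n]
    [Fintype ι] {D : ι → Matrix m n ℂ} (h : ∑ i, ((D i)ᴴ * D i).trace = 0) (i : ι) : D i = 0 := by
  have hterm := (Finset.sum_eq_zero_iff_of_nonneg fun i _ =>
    (posSemidef_conjTranspose_mul_self (D i)).trace_nonneg).mp h i (Finset.mem_univ i)
  exact trace_conjTranspose_mul_self_eq_zero_iff.mp hterm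

/-- A family of matrices closed under adjoints along `τ`, with `∑ aᵢ aᵢᴴ = b²` for a positive
definite `b`. The `b⁻¹ aᵢ` are then the Kraus operators of the unital completely positive map
`y ↦ b⁻¹ (∑ aᵢ y aᵢᴴ) b⁻¹`, which preserves the functional `Tr (b² ·)`. -/
structure IsSelfAdjointKraus (a : ι → Matrix n n ℂ) (τ : ι ≃ ι) (b : Matrix n n ℂ) : Prop where
  apply_equiv : ∀ i, a (τ i) = (a i)ᴴ
  posDef : b.PosDef
  sum_mul_conjTranspose : ∑ i, a i * (a i)ᴴ = b * b

namespace IsSelfAdjointKraus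

theorem sum_conjTranspose_mul (ha : IsSelfAdjointKraus a τ b) : ∑ i, (a i)ᴴ * a i = b * b := by
  rw [← ha.sum_mul_conjTranspose, ← Equiv.sum_comp τ]
  simp only [ha.apply_equiv, conjTranspose_conjTranspose]

theorem sum_mul_conjTranspose_mul (ha : IsSelfAdjointKraus a τ b)
    (hy : ∑ i, a i * y * (a i)ᴴ = b * y * b) : ∑ i, a i * yᴴ * (a i)ᴴ = b * yᴴ * b := by
  have hstar := congrArg conjTranspose hy
  rw [conjTranspose_sum] at hstar
  simpa only [conjTranspose_mul, conjTranspose_conjTranspose, ha.posDef.isHermitian.eq,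
    Matrix.mul_assoc] using hstar

variable [DecidableEq n]

theorem isUnit_det (ha : IsSelfAdjointKraus a τ b) : IsUnit b.det :=
  (isUnit_iff_isUnit_det b).mp ha.posDef.isUnit

-- The invariant functional `Tr (b² ·)` turns the Schwarz inequality for `yᴴ y` into an equality.
theorem commute_of_fixed (ha : IsSelfAdjointKraus a τ b)
    (hy : ∑ i, a i * y * (a i)ᴴ = b * y * b) (i : ι) : Commute y (a i * b⁻¹) := by
  have hb := ha.posDef.isHermitian.eq
  have hdet := ha.isUnit_det
  have hinv := ha.posDef.isHermitian.inv.eq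
  have hD : ∀ i, y * (a i)ᴴ - (a i)ᴴ * (b⁻¹ * y * b) = 0 := by
    apply eq_zero_of_sum_trace_conjTranspose_mul_self
    have hexpand : ∀ i, ((y * (a i)ᴴ - (a i)ᴴ * (b⁻¹ * y * b))ᴴ *
        (y * (a i)ᴴ - (a i)ᴴ * (b⁻¹ * y * b))).trace =
        (yᴴ * y * ((a i)ᴴ * a i)).trace - (a i * yᴴ * (a i)ᴴ * (b⁻¹ * y * b)).trace
          - (b * yᴴ * b⁻¹ * (a i * y * (a i)ᴴ)).trace
          + (b * yᴴ * b⁻¹ * (a i * (a i)ᴴ) * (b⁻¹ * y * b)).trace := by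
      intro i
      rw [← Matrix.mul_assoc (yᴴ * y), trace_mul_comm (yᴴ * y * _) (a i), ← trace_sub, ← trace_sub,
        ← trace_add]
      congr 1
      simp only [conjTranspose_sub, conjTranspose_mul, conjTranspose_conjTranspose, hb, hinv,
        Matrix.sub_mul, Matrix.mul_sub, Matrix.mul_assoc]
      abel
    simp only [hexpand, Finset.sum_add_distrib, Finset.sum_sub_distrib, ← trace_sum,
      ← Matrix.mul_sum, ← Matrix.sum_mul, ha.sum_mul_conjTranspose, ha.sum_conjTranspose_mul, hy,
      ha.sum_mul_conjTranspose_mul hy]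
    rw [← Matrix.mul_assoc (yᴴ * y), trace_mul_comm (yᴴ * y * b) b]
    simp only [Matrix.mul_assoc, mul_nonsing_inv_cancel_left _ _ hdet,
      nonsing_inv_mul_cancel_left _ _ hdet]
    ring
  have hi := hD (τ.symm i)
  rw [← ha.apply_equiv, Equiv.apply_symm_apply, sub_eq_zero] at hi
  rw [Commute, SemiconjBy, ← Matrix.mul_assoc, hi]
  simp only [Matrix.mul_assoc, mul_nonsing_inv _ hdet, Matrix.mul_one]

theorem fixed_of_commute (ha : IsSelfAdjointKraus a τ b) (hy : ∀ i, Commute y (a i * b⁻¹)) :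
    ∑ i, a i * y * (a i)ᴴ = b * y * b := by
  have hdet := ha.isUnit_det
  have hmul : ∀ i, y * a i = a i * (b⁻¹ * y * b) := fun i => by
    rw [← Matrix.mul_assoc, ← Matrix.mul_assoc, ← (hy i).eq, ← Matrix.mul_assoc,
      nonsing_inv_mul_cancel_right _ _ hdet]
  have hterm : ∀ i, a i * y * (a i)ᴴ = a i * (a i)ᴴ * (b⁻¹ * y * b) := fun i => by
    rw [← ha.apply_equiv, Matrix.mul_assoc, hmul, Matrix.mul_assoc (a i)]
  simp only [hterm, ← Matrix.sum_mul, ha.sum_mul_conjTranspose]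
  simp only [Matrix.mul_assoc, mul_nonsing_inv_cancel_left _ _ hdet]

theorem commute_inv_mul (ha : IsSelfAdjointKraus a τ b) (hy : ∀ i, Commute y (a i * b⁻¹)) (i : ι) :
    Commute y (b⁻¹ * a i) := by
  have hstar := ha.commute_of_fixed (ha.sum_mul_conjTranspose_mul (ha.fixed_of_commute hy)) (τ i)
  have := hstar.star_star
  simpa [star_eq_conjTranspose, ha.apply_equiv, ha.posDef.isHermitian.inv.eq] using this

/-- The fixed-point algebra of the map `y ↦ b⁻¹ (∑ aᵢ y aᵢᴴ) b⁻¹`, as the commutant of the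
`aᵢ b⁻¹`. -/
def fixedPoints (ha : IsSelfAdjointKraus a τ b) : StarSubalgebra ℂ (Matrix n n ℂ) where
  toSubalgebra := Subalgebra.centralizer ℂ (Set.range fun i => a i * b⁻¹)
  star_mem' {y} hy := by
    have hy : ∀ i, Commute y (a i * b⁻¹) := fun i => (hy _ ⟨i, rfl⟩).symm
    rintro _ ⟨i, rfl⟩
    exact (ha.commute_of_fixed (ha.sum_mul_conjTranspose_mul (ha.fixed_of_commute hy)) i).symm

theorem mem_fixedPoints (ha : IsSelfAdjointKraus a τ b) :
    y ∈ ha.fixedPoints ↔ ∀ i, Commute y (a i * b⁻¹) :=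
  ⟨fun hy i => (hy _ ⟨i, rfl⟩).symm, fun hy => Set.forall_mem_range.mpr fun i => (hy i).symm⟩

theorem mul_mul_inv_mem_fixedPoints (ha : IsSelfAdjointKraus a τ b) (hy : y ∈ ha.fixedPoints) :
    b * y * b⁻¹ ∈ ha.fixedPoints := by
  have hdet := ha.isUnit_det
  rw [mem_fixedPoints] at hy ⊢
  intro i
  calc b * y * b⁻¹ * (a i * b⁻¹) = b * (y * (b⁻¹ * a i)) * b⁻¹ := by
        simp only [Matrix.mul_assoc]
    _ = a i * b⁻¹ * (b * y * b⁻¹) := by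
        rw [(ha.commute_inv_mul hy i).eq]
        simp only [Matrix.mul_assoc, mul_nonsing_inv_cancel_left _ _ hdet,
          nonsing_inv_mul_cancel_left _ _ hdet]

end IsSelfAdjointKraus

end FixedPoints

/-! ### Positive definite normalizers of a star algebra -/

section Normalizer

variable {n : Type*} [Fintype n] [DecidableEq n] (N : StarSubalgebra ℂ (Matrix n n ℂ))
  {b : Matrix n n ℂ}

theorem eq_zero_of_forall_trace_mul_eq_zero {N : StarSubalgebra ℂ (Matrix n n ℂ)}
    {x : Matrix n n ℂ} (hx : x ∈ N) (h : ∀ z ∈ N, (x * z).trace = 0) : x = 0 :=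
  trace_mul_conjTranspose_self_eq_zero_iff.mp (h _ (star_mem hx))

-- `h` is the trace-preserving conditional expectation of `b`.
theorem exists_mem_forall_trace_mul_eq (b : Matrix n n ℂ) :
    ∃ h ∈ N, ∀ x ∈ N, (h * x).trace = (b * x).trace := by
  let form : N →ₗ[ℂ] Module.Dual ℂ N :=
    LinearMap.mk₂ ℂ (fun x z : N => ((x : Matrix n n ℂ) * (z : Matrix n n ℂ)).trace)
      (fun x y z => by simp [Matrix.add_mul]) (fun c x z => by simp)
      (fun x y z => by simp [Matrix.mul_add]) (fun c x z => by simp)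
  have hinj : Function.Injective form := by
    rw [injective_iff_map_eq_zero]
    intro x hx
    exact Subtype.ext (eq_zero_of_forall_trace_mul_eq_zero x.2 fun z hz =>
      LinearMap.congr_fun hx ⟨z, hz⟩)
  have : FiniteDimensional ℂ N := inferInstanceAs (FiniteDimensional ℂ N.toSubalgebra)
  have hsurj : Function.Surjective form :=
    (LinearMap.injective_iff_surjective_of_finrank_eq_finrank
      Subspace.dual_finrank_eq.symm).mp hinj
  obtain ⟨h, hh⟩ := hsurj ((traceLinearMap n ℂ ℂ ∘ₗ LinearMap.mulLeft ℂ b).domRestrict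
    N.toSubalgebra.toSubmodule)
  exact ⟨h, h.2, fun x hx => LinearMap.congr_fun hh ⟨x, hx⟩⟩

theorem exists_mem_mul_eq_one {N : StarSubalgebra ℂ (Matrix n n ℂ)} (hb : b.PosDef)
    {h : Matrix n n ℂ} (hh : h ∈ N) (htrace : ∀ x ∈ N, (h * x).trace = (b * x).trace) :
    ∃ g ∈ N, h * g = 1 := by
  have hinj : Function.Injective (LinearMap.mulLeft ℂ (⟨h, hh⟩ : N)) := by
    rw [injective_iff_map_eq_zero]
    intro x hx
    have hx : h * x = 0 := congrArg Subtype.val hx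
    have hzero : ((x : Matrix n n ℂ)ᴴ * b * (x : Matrix n n ℂ)ᴴᴴ).trace = 0 := by
      rw [conjTranspose_conjTranspose, Matrix.mul_assoc, trace_mul_comm, Matrix.mul_assoc,
        ← star_eq_conjTranspose, ← htrace _ (mul_mem x.2 (star_mem x.2)), ← Matrix.mul_assoc, hx,
        Matrix.zero_mul, trace_zero]
    have hxb := mul_eq_zero_of_trace_mul_mul_conjTranspose hb.posSemidef hzero
    have hxH : (x : Matrix n n ℂ)ᴴ = 0 := (hb.isUnit.mul_left_eq_zero).mp hxb
    exact Subtype.ext (conjTranspose_eq_zero.mp hxH)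
  have : FiniteDimensional ℂ N := inferInstanceAs (FiniteDimensional ℂ N.toSubalgebra)
  obtain ⟨g, hg⟩ := LinearMap.injective_iff_surjective.mp hinj 1
  exact ⟨g, g.2, congrArg Subtype.val hg⟩

theorem mul_eq_conj_mul {N : StarSubalgebra ℂ (Matrix n n ℂ)} (hb : IsUnit b.det)
    (hconj : ∀ x ∈ N, b * x * b⁻¹ ∈ N) {h : Matrix n n ℂ} (hh : h ∈ N)
    (htrace : ∀ x ∈ N, (h * x).trace = (b * x).trace) {x : Matrix n n ℂ} (hx : x ∈ N) :
    h * x = b * x * b⁻¹ * h := by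
  rw [← sub_eq_zero]
  refine eq_zero_of_forall_trace_mul_eq_zero
    (sub_mem (mul_mem hh hx) (mul_mem (hconj x hx) hh)) fun z hz => ?_
  rw [Matrix.sub_mul, trace_sub, sub_eq_zero]
  calc (h * x * z).trace = (b * x * z).trace := by
        rw [Matrix.mul_assoc, htrace _ (mul_mem hx hz), Matrix.mul_assoc]
    _ = (b * (z * (b * x * b⁻¹))).trace := by
        rw [trace_mul_comm b, trace_mul_comm (b * x)]
        simp only [Matrix.mul_assoc, nonsing_inv_mul _ hb, Matrix.mul_one]
    _ = (b * x * b⁻¹ * h * z).trace := by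
        rw [← htrace _ (mul_mem hz (hconj x hx)), ← Matrix.mul_assoc, trace_mul_comm,
          ← Matrix.mul_assoc]

theorem exists_mem_mul_eq_of_conj_mem (hb : b.PosDef) (hconj : ∀ x ∈ N, b * x * b⁻¹ ∈ N) :
    ∃ h ∈ N, ∃ k, (∀ x ∈ N, Commute k x) ∧ b = h * k := by
  have hdet := (isUnit_iff_isUnit_det b).mp hb.isUnit
  obtain ⟨h, hh, htrace⟩ := exists_mem_forall_trace_mul_eq N b
  obtain ⟨g, -, hg⟩ := exists_mem_mul_eq_one hb hh htrace
  refine ⟨h, hh, g * b, fun x hx => ?_, by rw [← Matrix.mul_assoc, hg, Matrix.one_mul]⟩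
  calc g * b * x = g * (b * x * b⁻¹) * (h * g) * b := by
        rw [hg, Matrix.mul_one, Matrix.mul_assoc g (_ * b⁻¹), nonsing_inv_mul_cancel_right _ _ hdet,
          Matrix.mul_assoc]
    _ = g * (b * x * b⁻¹ * h) * g * b := by simp only [Matrix.mul_assoc]
    _ = g * h * x * g * b := by
        rw [← mul_eq_conj_mul hdet hconj hh htrace hx, ← Matrix.mul_assoc]
    _ = x * (g * b) := by rw [mul_eq_one_comm.mp hg, Matrix.one_mul, Matrix.mul_assoc]

end Normalizer

/-! ### Factorization over commuting algebras -/

section Factorization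

variable {n ι : Type*} [Fintype n] [DecidableEq n] [Fintype ι] {a : ι → Matrix n n ℂ} {τ : ι ≃ ι}
  {b T : Matrix n n ℂ}

-- Writing `b = h k` with `h` in the fixed-point algebra and `k` in its commutant splits the `b²`
-- between `a i` and its partner into the two factors.
theorem IsSelfAdjointKraus.exists_mul_mul_eq_mul (ha : IsSelfAdjointKraus a τ b) :
    ∃ X : ι → ι → Matrix n n ℂ, ∃ h ∈ ha.fixedPoints,
      (∀ i i', ∀ z ∈ ha.fixedPoints, Commute (X i i') z) ∧
      ∀ i i', ∀ y ∈ ha.fixedPoints, a i * y * a i' = X i i' * (b * y * b⁻¹ * (h * h)) := by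
  obtain ⟨h, hh, k, hk, hbhk⟩ := exists_mem_mul_eq_of_conj_mem ha.fixedPoints ha.posDef
    fun y hy => ha.mul_mul_inv_mem_fixedPoints hy
  have hdet := ha.isUnit_det
  have hX : ∀ i i', ∀ z ∈ ha.fixedPoints, Commute (a i * b⁻¹ * (k * k) * (b⁻¹ * a i')) z :=
    fun i i' z hz =>
      ((((ha.mem_fixedPoints.mp hz i).mul_right
        ((hk z hz).symm.mul_right (hk z hz).symm)).mul_right
          (ha.commute_inv_mul (ha.mem_fixedPoints.mp hz) i')).symm)
  refine ⟨fun i i' => a i * b⁻¹ * (k * k) * (b⁻¹ * a i'), h, hh, hX, fun i i' y hy => ?_⟩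
  have hy' := ha.mul_mul_inv_mem_fixedPoints hy
  have hbb : b * b = h * h * (k * k) := by
    rw [hbhk, (hk h hh).mul_mul_mul_comm]
  calc a i * y * a i' = a i * b⁻¹ * (b * y * b⁻¹) * (b * a i') := by
        simp only [Matrix.mul_assoc, nonsing_inv_mul_cancel_left _ _ hdet]
    _ = b * y * b⁻¹ * (a i * b⁻¹ * (b * b) * (b⁻¹ * a i')) := by
        rw [← (ha.mem_fixedPoints.mp hy' i).eq]
        simp only [Matrix.mul_assoc, mul_nonsing_inv_cancel_left _ _ hdet]
    _ = b * y * b⁻¹ * (a i * b⁻¹ * (h * h) * (k * k * (b⁻¹ * a i'))) := by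
        rw [hbb]
        simp only [Matrix.mul_assoc]
    _ = b * y * b⁻¹ * (h * h) * (a i * b⁻¹ * (k * k) * (b⁻¹ * a i')) := by
        rw [← (ha.mem_fixedPoints.mp (mul_mem hh hh) i).eq]
        simp only [Matrix.mul_assoc]
    _ = _ := (hX i i' _ (mul_mem hy' (mul_mem hh hh))).symm.eq

theorem suppProj_mul_of_sum_mul_conjTranspose_eq (hsum : ∑ i, a i * (a i)ᴴ = T) (i : ι) :
    suppProj T * a i = a i := by
  have hT : T.PosSemidef := hsum ▸ posSemidef_sum _ fun i _ => posSemidef_self_mul_conjTranspose _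
  set q := 1 - suppProj T with hq
  have hqH : qᴴ = q := by rw [hq, conjTranspose_sub, conjTranspose_one, isHermitian_suppProj]
  have hzero : ∑ i, (((a i)ᴴ * q)ᴴ * ((a i)ᴴ * q)).trace = 0 := by
    have hterm : ∀ i, ((a i)ᴴ * q)ᴴ * ((a i)ᴴ * q) = q * (a i * (a i)ᴴ) * q := fun i => by
      rw [conjTranspose_mul, conjTranspose_conjTranspose, hqH]
      simp only [Matrix.mul_assoc]
    rw [← trace_sum]
    simp only [hterm, ← Matrix.mul_sum, ← Matrix.sum_mul, hsum]
    rw [hq, Matrix.sub_mul, suppProj_mul_self hT.isHermitian, Matrix.one_mul, sub_self,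
      Matrix.zero_mul, trace_zero]
  have hqa := congrArg conjTranspose (eq_zero_of_sum_trace_conjTranspose_mul_self hzero i)
  rw [conjTranspose_mul, conjTranspose_conjTranspose, hqH, conjTranspose_zero, hq,
    Matrix.sub_mul, Matrix.one_mul, sub_eq_zero] at hqa
  exact hqa.symm

/-- The square root of a positive semidefinite matrix, made invertible by the identity on the
kernel. -/
noncomputable def regSqrt (T : Matrix n n ℂ) : Matrix n n ℂ :=
  cfc (fun x : ℝ => if x = 0 then 1 else √x) T

open scoped MatrixOrder in
theorem posDef_regSqrt (hT : T.PosSemidef) : (regSqrt T).PosDef := by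
  have hpos : ∀ x ∈ spectrum ℝ T, 0 < if x = 0 then (1 : ℝ) else √x := fun x hx => by
    split_ifs with h
    · exact one_pos
    · exact Real.sqrt_pos.mpr (lt_of_le_of_ne (spectrum_real_nonneg hT hx) (Ne.symm h))
  have hnonneg : (regSqrt T).PosSemidef :=
    nonneg_iff_posSemidef.mp (cfc_nonneg fun x hx => (hpos x hx).le)
  refine hnonneg.posDef_iff_isUnit.mpr ?_
  exact (isUnit_cfc_iff _ T (continuousOn_spectrum_real T _)
    hT.isHermitian.isSelfAdjoint).mpr
    fun x hx => (hpos x hx).ne'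

theorem regSqrt_mul_self (hT : T.PosSemidef) : regSqrt T * regSqrt T = T + (1 - suppProj T) := by
  have hone := cfc_const_one ℝ T hT.isHermitian.isSelfAdjoint
  have hcont := continuousOn_spectrum_real T
  nth_rw 3 [← cfc_id_of_isHermitian hT.isHermitian]
  rw [← hone, regSqrt, cfc_mul_cfc, suppProj, ← cfc_sub _ _ _ (hcont _) (hcont _),
    ← cfc_add _ _ _ (hcont _) (hcont _)]
  refine cfc_congr fun x hx => ?_
  by_cases h : x = 0 <;> simp [h, Real.mul_self_sqrt (spectrum_real_nonneg hT hx)]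

theorem regSqrt_mul_cfc_inv_sqrt (hT : T.PosSemidef) :
    regSqrt T * cfc (fun x : ℝ => (√x)⁻¹) T = suppProj T := by
  rw [regSqrt, cfc_mul_cfc]
  refine cfc_congr fun x hx => ?_
  by_cases h : x = 0
  · simp [h]
  · simp [h, Real.sqrt_ne_zero (spectrum_real_nonneg hT hx)]

theorem isSelfAdjointKraus_option (hτ : ∀ i, a (τ i) = (a i)ᴴ) (hsum : ∑ i, a i * (a i)ᴴ = T) :
    IsSelfAdjointKraus (fun i : Option ι => i.elim (1 - suppProj T) a) (Equiv.optionCongr τ)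
      (regSqrt T) := by
  have hT : T.PosSemidef := hsum ▸ posSemidef_sum _ fun i _ => posSemidef_self_mul_conjTranspose _
  have hq : (1 - suppProj T)ᴴ = 1 - suppProj T := by
    rw [conjTranspose_sub, conjTranspose_one, isHermitian_suppProj]
  refine ⟨Option.forall.mpr ⟨hq.symm, hτ⟩, posDef_regSqrt hT, ?_⟩
  have hidem : IsIdempotentElem (suppProj T) := suppProj_mul_suppProj T
  simp only [Fintype.sum_option, Option.elim_none, Option.elim_some, hsum, hq,
    hidem.one_sub.eq, regSqrt_mul_self hT, add_comm]

theorem mem_fixedPoints_option (hτ : ∀ i, a (τ i) = (a i)ᴴ) (hsum : ∑ i, a i * (a i)ᴴ = T)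
    {d R : Matrix n n ℂ} (hd : d = cfc (fun x : ℝ => (√x)⁻¹) T)
    (hR : ∑ i, a i * (d * R * d) * (a i)ᴴ = R) :
    d * R * d ∈ (isSelfAdjointKraus_option hτ hsum).fixedPoints := by
  have hT : T.PosSemidef := hsum ▸ posSemidef_sum _ fun i _ => posSemidef_self_mul_conjTranspose _
  have hPa := suppProj_mul_of_sum_mul_conjTranspose_eq hsum
  have haP : ∀ i, (a i)ᴴ * suppProj T = (a i)ᴴ := fun i => by
    rw [← hτ, ← (isHermitian_suppProj T).eq, ← conjTranspose_conjTranspose (a (τ i)),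
      ← conjTranspose_mul, hτ, conjTranspose_conjTranspose, hPa]
  have hPR : suppProj T * R = R := by
    rw [← hR, Matrix.mul_sum]
    simp only [← Matrix.mul_assoc, hPa]
  have hRP : R * suppProj T = R := by
    rw [← hR, Matrix.sum_mul]
    simp only [Matrix.mul_assoc, haP]
  have hPd : suppProj T * d = d := hd ▸ suppProj_mul_cfc T (by simp)
  have hbd : regSqrt T * d = suppProj T := hd ▸ regSqrt_mul_cfc_inv_sqrt hT
  have hdb : d * regSqrt T = suppProj T := by
    rw [← hbd, hd, regSqrt, cfc_commute_cfc]
  refine (IsSelfAdjointKraus.mem_fixedPoints _).mpr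
    (IsSelfAdjointKraus.commute_of_fixed (isSelfAdjointKraus_option hτ hsum) ?_)
  have hker : (1 - suppProj T) * (d * R * d) = 0 := by
    rw [Matrix.mul_assoc d, ← Matrix.mul_assoc, Matrix.sub_mul, Matrix.one_mul, hPd, sub_self,
      Matrix.zero_mul]
  simp only [Fintype.sum_option, Option.elim_none, Option.elim_some, hR, hker, Matrix.zero_mul,
    zero_add]
  calc R = suppProj T * R * suppProj T := by rw [hPR, hRP]
    _ = regSqrt T * (d * R * d) * regSqrt T := by
        rw [← hbd]
        nth_rw 2 [hbd]
        rw [← hdb]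
        simp only [Matrix.mul_assoc]

theorem exists_commuting_factorization (hτ : ∀ i, a (τ i) = (a i)ᴴ)
    (hsum : ∑ i, a i * (a i)ᴴ = T) {d : Matrix n n ℂ} (hd : d = cfc (fun x : ℝ => (√x)⁻¹) T) :
    ∃ (N : StarSubalgebra ℂ (Matrix n n ℂ)) (X : ι → ι → Matrix n n ℂ)
      (Y : Matrix n n ℂ → Matrix n n ℂ), (∀ i i', ∀ z ∈ N, Commute (X i i') z) ∧
      ∀ R, ∑ i, a i * (d * R * d) * (a i)ᴴ = R →
        Y R ∈ N ∧ ∀ i i', a i * (d * R * d) * a i' = X i i' * Y R := by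
  have ha := isSelfAdjointKraus_option hτ hsum
  obtain ⟨X, h, hh, hX, hfactor⟩ := ha.exists_mul_mul_eq_mul
  refine ⟨ha.fixedPoints, fun i i' => X (some i) (some i'),
    fun R => regSqrt T * (d * R * d) * (regSqrt T)⁻¹ * (h * h), fun i i' => hX _ _, fun R hR => ?_⟩
  have hmem := mem_fixedPoints_option hτ hsum hd hR
  exact ⟨mul_mem (ha.mul_mul_inv_mem_fixedPoints hmem) (mul_mem hh hh),
    fun i i' => hfactor (some i) (some i') _ hmem⟩

end Factorization

/-! ### Minimal projections of a star algebra -/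

section MinimalProjections

variable {n : Type*} [Fintype n] {p q : Matrix n n ℂ}

theorem rank_lt_rank_of_mul_eq (hqq : IsIdempotentElem q) (hpq : p * q = q) (hqp : q * p = q)
    (hne : q ≠ p) : q.rank < p.rank := by
  refine Submodule.finrank_lt_finrank_of_lt (lt_of_le_of_ne ?_ fun h => hne ?_)
  · rintro _ ⟨v, rfl⟩
    exact ⟨q *ᵥ v, by simp [mulVec_mulVec, hpq]⟩
  · rw [← hqp]
    classical
    refine toLin'.injective (LinearMap.ext fun v => ?_)
    obtain ⟨w, hw⟩ : p.mulVecLin v ∈ LinearMap.range q.mulVecLin := h ▸ ⟨v, rfl⟩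
    simp only [mulVecLin_apply] at hw
    rw [toLin'_apply, toLin'_apply, ← mulVec_mulVec, ← hw, mulVec_mulVec, hqq.eq]

theorem mul_eq_of_sum_eq {ι : Type*} [Fintype ι] {P : ι → Matrix n n ℂ}
    (hP : ∀ i, IsIdempotentElem (P i)) (hort : Pairwise fun i j => P i * P j = 0)
    (hsum : ∑ i, P i = p) (i : ι) : P i * p = P i ∧ p * P i = P i := by
  rw [← hsum, Matrix.mul_sum, Matrix.sum_mul]
  constructor
  · rw [Finset.sum_eq_single i (fun j _ hj => hort hj.symm) (by simp), hP i]
  · rw [Finset.sum_eq_single i (fun j _ hj => hort hj) (by simp), hP i]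

variable [DecidableEq n] {N : StarSubalgebra ℂ (Matrix n n ℂ)}

/-- `p` is a minimal projection of `N`: a nonzero orthogonal projection whose corner `p N p`
consists of the scalar multiples of `p`. -/
structure IsMinimalProjection (N : StarSubalgebra ℂ (Matrix n n ℂ)) (p : Matrix n n ℂ) :
    Prop where
  mem : p ∈ N
  isStarProjection : IsStarProjection p
  ne_zero : p ≠ 0
  exists_smul_eq : ∀ x ∈ N, ∃ c : ℂ, p * x * p = c • p

theorem spectralProj_mem {y : Matrix n n ℂ} (hy : y ∈ N) (x : ℝ) : spectralProj y x ∈ N := by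
  have : IsClosed (N : Set (Matrix n n ℂ)) :=
    N.toSubalgebra.toSubmodule.closed_of_finiteDimensional
  exact cfc_mem (𝕜' := ℂ) _ hy

theorem isStarProjection_spectralProj (y : Matrix n n ℂ) (x : ℝ) :
    IsStarProjection (spectralProj y x) where
  isIdempotentElem := by
    rw [IsIdempotentElem]
    nth_rw 1 [spectralProj]
    rw [cfc_mul_spectralProj, if_pos rfl, one_smul]
  isSelfAdjoint := isHermitian_cfc _ y

theorem exists_mul_spectralProj_ne_zero {y : Matrix n n ℂ} (hy : y.IsHermitian) (hp : p ≠ 0) :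
    ∃ x : ℝ, p * spectralProj y x ≠ 0 := by
  by_contra! h
  apply hp
  rw [← Matrix.mul_one p, ← sum_spectralProj hy, Matrix.mul_sum]
  exact Finset.sum_eq_zero fun x _ => h x

-- A projection that majorizes no smaller one lies below a spectral projection of each Hermitian
-- element of its corner, which is therefore scalar.
theorem exists_smul_eq_of_isHermitian (hpN : p ∈ N) (hp : IsStarProjection p) (hp0 : p ≠ 0)
    (hmin : ∀ q ∈ N, IsStarProjection q → q ≠ 0 → p * q = q → q = p)
    {y : Matrix n n ℂ} (hyN : y ∈ N) (hy : y.IsHermitian) : ∃ c : ℝ, p * y * p = c • p := by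
  have hpp : p * p = p := hp.isIdempotentElem
  set z := p * y * p with hz
  have hzN : z ∈ N := mul_mem (mul_mem hpN hyN) hpN
  have hzH : z.IsHermitian := by
    have hpH : pᴴ = p := hp.isSelfAdjoint
    rw [IsHermitian, hz]
    simp only [conjTranspose_mul, hpH, hy.eq, Matrix.mul_assoc]
  have hpz : p * z = z := by rw [hz, ← Matrix.mul_assoc, ← Matrix.mul_assoc, hpp]
  have hzp : z * p = z := by rw [hz, Matrix.mul_assoc, hpp]
  obtain ⟨c, hc⟩ := exists_mul_spectralProj_ne_zero hzH hp0
  have hcomm : Commute (spectralProj z c) p := Commute.cfc_real (hzp.trans hpz.symm) _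
  have hsub : p * spectralProj z c = p :=
    hmin _ (mul_mem hpN (spectralProj_mem hzN c))
      (hp.mul (isStarProjection_spectralProj z c) hcomm.symm) hc
      (by rw [← Matrix.mul_assoc, hpp])
  have hscalar : z * spectralProj z c = c • spectralProj z c := by
    simpa only [cfc_id_of_isHermitian hzH] using cfc_mul_spectralProj (fun x => x) z c
  refine ⟨c, ?_⟩
  calc z = z * p * spectralProj z c := by rw [Matrix.mul_assoc, hsub, hzp]
    _ = z * spectralProj z c := by rw [hzp]
    _ = p * (z * spectralProj z c) := by rw [← Matrix.mul_assoc, hpz]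
    _ = c • p := by rw [hscalar, Matrix.mul_smul, hsub]

theorem isMinimalProjection_of_forall_eq (hpN : p ∈ N) (hp : IsStarProjection p) (hp0 : p ≠ 0)
    (hmin : ∀ q ∈ N, IsStarProjection q → q ≠ 0 → p * q = q → q = p) :
    IsMinimalProjection N p where
  mem := hpN
  isStarProjection := hp
  ne_zero := hp0
  exists_smul_eq x hx := by
    obtain ⟨c, hc⟩ := exists_smul_eq_of_isHermitian hpN hp hp0 hmin
      (y := x + xᴴ) (add_mem hx (star_mem hx)) (isHermitian_add_transpose_self x)
    obtain ⟨d, hd⟩ := exists_smul_eq_of_isHermitian hpN hp hp0 hmin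
      (y := Complex.I • (x - xᴴ)) (N.smul_mem (sub_mem hx (star_mem hx)) _) (by
        simp [IsHermitian, smul_sub, neg_add_eq_sub])
    refine ⟨(c - Complex.I * d) / 2, ?_⟩
    have hx : x = (1 / 2 : ℂ) • (x + xᴴ) - (Complex.I / 2) • Complex.I • (x - xᴴ) := by
      rw [smul_smul, div_mul_eq_mul_div, Complex.I_mul_I]
      module
    have hre : p * (x + xᴴ) * p = (c : ℂ) • p := hc
    have him : p * (Complex.I • (x - xᴴ)) * p = (d : ℂ) • p := hd
    rw [hx, Matrix.mul_sub, Matrix.sub_mul, Matrix.mul_smul, Matrix.smul_mul, hre,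
      Matrix.mul_smul p (Complex.I / 2), Matrix.smul_mul, him]
    module

/-- `P` is a finite family of mutually orthogonal minimal projections of `N` with sum `p`. -/
structure IsMinimalDecomposition (N : StarSubalgebra ℂ (Matrix n n ℂ)) {ι : Type*} [Fintype ι]
    (P : ι → Matrix n n ℂ) (p : Matrix n n ℂ) : Prop where
  isMinimalProjection : ∀ i, IsMinimalProjection N (P i)
  pairwise_mul_eq_zero : Pairwise fun i j => P i * P j = 0
  sum_eq : ∑ i, P i = p

theorem IsMinimalDecomposition.sumElim {ι κ : Type*} [Fintype ι] [Fintype κ]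
    {P : ι → Matrix n n ℂ} {Q : κ → Matrix n n ℂ} (hP : IsMinimalDecomposition N P p)
    (hQ : IsMinimalDecomposition N Q q) (hpq : p * q = 0) (hqp : q * p = 0) :
    IsMinimalDecomposition N (Sum.elim P Q) (p + q) where
  isMinimalProjection := Sum.rec hP.isMinimalProjection hQ.isMinimalProjection
  pairwise_mul_eq_zero := by
    have hPi := mul_eq_of_sum_eq (fun i => (hP.isMinimalProjection i).isStarProjection.1)
      hP.pairwise_mul_eq_zero hP.sum_eq
    have hQk := mul_eq_of_sum_eq (fun k => (hQ.isMinimalProjection k).isStarProjection.1)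
      hQ.pairwise_mul_eq_zero hQ.sum_eq
    rintro (i | k) (i' | k') hne
    · exact hP.pairwise_mul_eq_zero fun h => hne (congrArg _ h)
    · change P i * Q k' = 0
      rw [← (hPi i).1, ← (hQk k').2, Matrix.mul_assoc, ← Matrix.mul_assoc p, hpq, Matrix.zero_mul,
        Matrix.mul_zero]
    · change Q k * P i' = 0
      rw [← (hQk k).1, ← (hPi i').2, Matrix.mul_assoc, ← Matrix.mul_assoc q, hqp, Matrix.zero_mul,
        Matrix.mul_zero]
    · exact hQ.pairwise_mul_eq_zero fun h => hne (congrArg _ h)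
  sum_eq := by
    rw [Fintype.sum_sum_type, ← hP.sum_eq, ← hQ.sum_eq]
    rfl

theorem exists_isMinimalDecomposition (hpN : p ∈ N) (hp : IsStarProjection p) :
    ∃ (ι : Type) (_ : Fintype ι) (P : ι → Matrix n n ℂ), IsMinimalDecomposition N P p := by
  induction hk : p.rank using Nat.strong_induction_on generalizing p with
  | _ k ih =>
    by_cases hp0 : p = 0
    · exact ⟨Empty, inferInstance, Empty.elim, nofun, fun i => i.elim, by simp [hp0]⟩
    by_cases hmin : ∀ q ∈ N, IsStarProjection q → q ≠ 0 → p * q = q → q = p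
    · have := isMinimalProjection_of_forall_eq hpN hp hp0 hmin
      exact ⟨Unit, inferInstance, fun _ => p, fun _ => this, fun i j h => (h rfl).elim, by simp⟩
    push Not at hmin
    obtain ⟨q, hqN, hq, hq0, hpq, hne⟩ := hmin
    have hpp : p * p = p := hp.isIdempotentElem
    have hqq : q * q = q := hq.isIdempotentElem
    have hqp : q * p = q := by
      simpa [hp.isSelfAdjoint.star_eq, hq.isSelfAdjoint.star_eq] using congrArg star hpq
    have hsub := hq.sub_of_mul_eq_left hp hqp
    obtain ⟨ι, _, P, hP⟩ := ih _ (hk ▸ rank_lt_rank_of_mul_eq hqq hpq hqp hne) hqN hq rfl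
    obtain ⟨κ, _, Q, hQ⟩ := ih _ (hk ▸ rank_lt_rank_of_mul_eq hsub.isIdempotentElem
      (by rw [Matrix.mul_sub, hpp, hpq]) (by rw [Matrix.sub_mul, hpp, hqp])
      (by simpa using hq0)) (sub_mem hpN hqN) hsub rfl
    refine ⟨ι ⊕ κ, inferInstance, Sum.elim P Q, ?_⟩
    simpa using hP.sumElim hQ (by rw [Matrix.mul_sub, hqp, hqq, sub_self])
      (by rw [Matrix.sub_mul, hpq, hqq, sub_self])

end MinimalProjections

/-! ### Equivalence of minimal projections -/

section PartialIsometries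

variable {n : Type*} [Fintype n] {p q s v : Matrix n n ℂ}

theorem exists_isometry_of_isStarProjection (hp : IsStarProjection p) :
    ∃ (d : ℕ) (E : Matrix n (Fin d) ℂ), Eᴴ * E = 1 ∧ E * Eᴴ = p := by
  classical
  have hpH : p.IsHermitian := hp.isSelfAdjoint
  let U : Matrix n n ℂ := hpH.eigenvectorUnitary
  have hU : Uᴴ * U = 1 := Unitary.coe_star_mul_self hpH.eigenvectorUnitary
  have heig : ∀ i, hpH.eigenvalues i = 0 ∨ hpH.eigenvalues i = 1 := fun i =>
    hp.isIdempotentElem.spectrum_subset ℝ (hpH.eigenvalues_mem_spectrum_real i)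
  let e := (Fintype.equivFin {i // hpH.eigenvalues i = 1}).symm
  refine ⟨_, U.submatrix id (fun k => (e k : n)), ?_, ?_⟩
  · ext k k'
    have hentry : (Uᴴ * U) (e k) (e k') = (1 : Matrix n n ℂ) (e k) (e k') := by rw [hU]
    simpa [mul_apply, one_apply, Subtype.coe_inj] using hentry
  · ext a b
    have hspec : p = U * diagonal (fun i => (hpH.eigenvalues i : ℂ)) * Uᴴ := hpH.spectral_theorem
    conv_rhs => rw [hspec]
    rw [mul_apply, mul_apply]
    simp only [conjTranspose_apply, submatrix_apply, id_eq, mul_diagonal]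
    rw [Equiv.sum_comp e (fun i => U a i * star (U b i)),
      ← Finset.sum_subtype (Finset.univ.filter fun i => hpH.eigenvalues i = 1) (by simp)
      (fun i => U a i * star (U b i)), Finset.sum_filter]
    refine Finset.sum_congr rfl fun i _ => ?_
    rcases heig i with h | h <;> simp [h]

theorem pos_of_conjTranspose_mul_self_eq_smul (hq : IsStarProjection q) (hv : v ≠ 0) {c : ℂ}
    (hc : vᴴ * v = c • q) : 0 < c := by
  have trace_pos : ∀ {w : Matrix n n ℂ}, w ≠ 0 → 0 < (wᴴ * w).trace := fun hw =>
    (posSemidef_conjTranspose_mul_self _).trace_nonneg.lt_of_ne'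
      (trace_conjTranspose_mul_self_eq_zero_iff.not.mpr hw)
  have hq0 : q ≠ 0 := by
    rintro rfl
    exact hv (conjTranspose_mul_self_eq_zero.mp (by rw [hc, smul_zero]))
  have hqq : qᴴ * q = q := by
    rw [← star_eq_conjTranspose, hq.isSelfAdjoint.star_eq, hq.isIdempotentElem.eq]
  have hq_pos : 0 < q.trace := hqq ▸ trace_pos hq0
  have hcq_pos : 0 < c * q.trace := by
    simpa only [hc, trace_smul, smul_eq_mul] using trace_pos hv
  rw [← mul_inv_cancel_right₀ hq_pos.ne' c]
  exact mul_pos hcq_pos (RCLike.inv_pos.mpr hq_pos)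

theorem eq_of_conjTranspose_mul_self_eq_smul {c d : ℂ} (hv : v ≠ 0) (hpv : p * v = v)
    (hvq : v * q = v) (hc : vᴴ * v = c • q) (hd : v * vᴴ = d • p) : c = d := by
  have h : c • v = d • v := by
    calc c • v = v * (vᴴ * v) := by rw [hc, Matrix.mul_smul, hvq]
      _ = d • v := by rw [← Matrix.mul_assoc, hd, Matrix.smul_mul, hpv]
  exact smul_left_injective ℂ hv h

variable [DecidableEq n] {N : StarSubalgebra ℂ (Matrix n n ℂ)}

/-- Murray–von Neumann equivalence in `N`: `p` and `q` are the final and the initial projection of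
a partial isometry in `N`. -/
def MvNEquivalent (N : StarSubalgebra ℂ (Matrix n n ℂ)) (p q : Matrix n n ℂ) : Prop :=
  ∃ u ∈ N, uᴴ * u = q ∧ u * uᴴ = p

namespace MvNEquivalent

theorem refl (hp : p ∈ N) (hp' : IsStarProjection p) : MvNEquivalent N p p := by
  have hpH : pᴴ = p := hp'.isSelfAdjoint
  have hpp : p * p = p := hp'.isIdempotentElem
  exact ⟨p, hp, by rw [hpH, hpp], by rw [hpH, hpp]⟩

theorem symm (h : MvNEquivalent N p q) : MvNEquivalent N q p := by
  obtain ⟨u, hu, huq, hup⟩ := h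
  exact ⟨uᴴ, star_mem hu, by rw [conjTranspose_conjTranspose, hup],
    by rw [conjTranspose_conjTranspose, huq]⟩

theorem trans (hp : IsIdempotentElem p) (hs : IsIdempotentElem s) (hpq : MvNEquivalent N p q)
    (hqs : MvNEquivalent N q s) : MvNEquivalent N p s := by
  obtain ⟨u, hu, huq, hup⟩ := hpq
  obtain ⟨v, hv, hvs, hvq⟩ := hqs
  refine ⟨u * v, mul_mem hu hv, ?_, ?_⟩
  · calc (u * v)ᴴ * (u * v) = vᴴ * (uᴴ * u) * v := by
          simp only [conjTranspose_mul, Matrix.mul_assoc]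
      _ = vᴴ * v * (vᴴ * v) := by rw [huq, ← hvq]; simp only [Matrix.mul_assoc]
      _ = s := by rw [hvs, hs.eq]
  · calc u * v * (u * v)ᴴ = u * (v * vᴴ) * uᴴ := by
          simp only [conjTranspose_mul, Matrix.mul_assoc]
      _ = u * uᴴ * (u * uᴴ) := by rw [hvq, ← huq]; simp only [Matrix.mul_assoc]
      _ = p := by rw [hup, hp.eq]

end MvNEquivalent

namespace IsMinimalProjection

theorem mvNEquivalent_of_mul_eq (hp : IsMinimalProjection N p) (hq : IsMinimalProjection N q)
    (hvN : v ∈ N) (hv : v ≠ 0) (hpv : p * v = v) (hvq : v * q = v) : MvNEquivalent N p q := by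
  have hqv : q * vᴴ = vᴴ := by
    simpa [← star_eq_conjTranspose, hq.isStarProjection.isSelfAdjoint.star_eq]
      using congrArg star hvq
  have hvp : vᴴ * p = vᴴ := by
    simpa [← star_eq_conjTranspose, hp.isStarProjection.isSelfAdjoint.star_eq]
      using congrArg star hpv
  obtain ⟨c, hc⟩ := hq.exists_smul_eq _ (mul_mem (star_mem hvN) hvN)
  obtain ⟨d, hd⟩ := hp.exists_smul_eq _ (mul_mem hvN (star_mem hvN))
  replace hc : vᴴ * v = c • q := by
    rw [← hc, star_eq_conjTranspose, ← Matrix.mul_assoc, hqv, Matrix.mul_assoc, hvq]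
  replace hd : v * vᴴ = d • p := by
    rw [← hd, star_eq_conjTranspose, ← Matrix.mul_assoc, hpv, Matrix.mul_assoc, hvp]
  obtain rfl := eq_of_conjTranspose_mul_self_eq_smul hv hpv hvq hc hd
  obtain ⟨γ, hγ, (hγc : (γ : ℂ) = c)⟩ := RCLike.pos_iff_exists_ofReal.mp
    (pos_of_conjTranspose_mul_self_eq_smul hq.isStarProjection hv hc)
  have hscale : star (((√γ)⁻¹ : ℝ) : ℂ) * ((√γ)⁻¹ : ℝ) * c = 1 := by
    have : (√γ)⁻¹ * (√γ)⁻¹ * γ = 1 := by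
      rw [← mul_inv, Real.mul_self_sqrt hγ.le, inv_mul_cancel₀ hγ.ne']
    rw [Complex.star_def, Complex.conj_ofReal, ← hγc]
    exact_mod_cast this
  refine ⟨(((√γ)⁻¹ : ℝ) : ℂ) • v, N.smul_mem hvN _, ?_, ?_⟩
  · rw [conjTranspose_smul, Matrix.smul_mul, Matrix.mul_smul, smul_smul, hc, smul_smul, hscale,
      one_smul]
  · rw [conjTranspose_smul, Matrix.smul_mul, Matrix.mul_smul, smul_smul, hd, smul_smul,
      mul_comm (_ : ℂ) (star _), hscale, one_smul]

theorem mvNEquivalent_of_mul_mul_ne_zero (hp : IsMinimalProjection N p)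
    (hq : IsMinimalProjection N q) {x : Matrix n n ℂ} (hx : x ∈ N) (hne : p * x * q ≠ 0) :
    MvNEquivalent N p q := by
  have hpp : p * p = p := hp.isStarProjection.isIdempotentElem
  have hqq : q * q = q := hq.isStarProjection.isIdempotentElem
  refine hp.mvNEquivalent_of_mul_eq hq (mul_mem (mul_mem hp.mem hx) hq.mem) hne ?_ ?_
  · simp only [← Matrix.mul_assoc, hpp]
  · simp only [Matrix.mul_assoc, hqq]

end IsMinimalProjection

end PartialIsometries

/-! ### Block form of a star algebra and of its commutant -/

section BlockFrames

variable {n J : Type*} [Fintype n] {L R : J → Type*}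

/-- The matrix whose row `(j, a, k)` is the conjugate of the column `a` of `w j k`. -/
def frameMatrix (w : (j : J) → R j → Matrix n (L j) ℂ) : Matrix ((j : J) × (L j × R j)) n ℂ :=
  Matrix.of fun i b => star (w i.1 i.2.2 b i.2.1)

theorem frameMatrix_mul_mul_conjTranspose_apply (w : (j : J) → R j → Matrix n (L j) ℂ)
    (x : Matrix n n ℂ) (i i' : (j : J) × (L j × R j)) :
    (frameMatrix w * x * (frameMatrix w)ᴴ) i i' =
      ((w i.1 i.2.2)ᴴ * x * w i'.1 i'.2.2) i.2.1 i'.2.1 := by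
  simp only [mul_apply, frameMatrix, of_apply, conjTranspose_apply, star_star]

theorem mul_conjTranspose_mul_self_eq {u : Matrix n n ℂ} (hu : IsIdempotentElem (u * uᴴ)) :
    u * uᴴ * u = u := by
  have hzero : (u * uᴴ * u - u) * (u * uᴴ * u - u)ᴴ = 0 := by
    have hassoc : u * uᴴ * u * uᴴ = u * uᴴ := by rw [Matrix.mul_assoc, hu.eq]
    rw [conjTranspose_sub, conjTranspose_mul, Matrix.mul_sub, ← Matrix.mul_assoc, Matrix.sub_mul,
      hassoc, sub_self, Matrix.zero_mul, sub_zero]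
  exact sub_eq_zero.mp (self_mul_conjTranspose_eq_zero.mp hzero)

theorem conjTranspose_mul_mul_eq_conj_range {ℓ ℓ' : Type*} [Fintype ℓ] [Fintype ℓ'] [DecidableEq ℓ]
    [DecidableEq ℓ'] {v : Matrix n ℓ ℂ} {v' : Matrix n ℓ' ℂ} (hv : vᴴ * v = 1) (hv' : v'ᴴ * v' = 1)
    (x : Matrix n n ℂ) : vᴴ * x * v' = vᴴ * (v * vᴴ * x * (v' * v'ᴴ)) * v' := by
  calc vᴴ * x * v' = vᴴ * v * (vᴴ * x * v') * (v'ᴴ * v') := by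
        rw [hv, hv', Matrix.one_mul, Matrix.mul_one]
    _ = vᴴ * (v * vᴴ * x * (v' * v'ᴴ)) * v' := by simp only [Matrix.mul_assoc]

variable [DecidableEq n] [Fintype J] [∀ j, Fintype (R j)] [∀ j, Fintype (L j)]
  [∀ j, DecidableEq (L j)] {N : StarSubalgebra ℂ (Matrix n n ℂ)}
  {w : (j : J) → R j → Matrix n (L j) ℂ} {x : Matrix n n ℂ}

/-- A system of isometries `w j k : ℂ^(L j) → ℂ^n` with mutually orthogonal ranges spanning `ℂ^n`,
adapted to `N`: the partial isometries `w j k * (w j k')ᴴ` are matrix units of `N`, and `N` acts by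
scalars between ranges with the same `j` and by zero between ranges with different `j`. -/
structure IsBlockFrame (N : StarSubalgebra ℂ (Matrix n n ℂ))
    (w : (j : J) → R j → Matrix n (L j) ℂ) : Prop where
  conjTranspose_mul_self : ∀ j k, (w j k)ᴴ * w j k = 1
  conjTranspose_mul_of_ne : ∀ {i i' : (j : J) × R j}, i ≠ i' → (w i.1 i.2)ᴴ * w i'.1 i'.2 = 0
  sum_mul_conjTranspose : ∑ j, ∑ k, w j k * (w j k)ᴴ = 1
  mul_conjTranspose_mem : ∀ j k k', w j k * (w j k')ᴴ ∈ N
  exists_smul_one_eq : ∀ x ∈ N, ∀ j k k', ∃ c : ℂ, (w j k)ᴴ * x * w j k' = c • 1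
  mul_mul_eq_zero : ∀ x ∈ N, ∀ {j j'}, j ≠ j' → ∀ k k', (w j k)ᴴ * x * w j' k' = 0

namespace IsBlockFrame

theorem conjTranspose_mul_mul_of_commute (hw : IsBlockFrame N w) (hx : ∀ z ∈ N, Commute x z)
    (j : J) (k k' : R j) : (w j k)ᴴ * x * w j k = (w j k')ᴴ * x * w j k' := by
  calc (w j k)ᴴ * x * w j k = (w j k)ᴴ * (x * (w j k * (w j k')ᴴ)) * w j k' := by
        simp only [Matrix.mul_assoc, hw.conjTranspose_mul_self, Matrix.mul_one]
    _ = (w j k)ᴴ * w j k * ((w j k')ᴴ * x * w j k') := by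
        rw [(hx _ (hw.mul_conjTranspose_mem j k k')).eq]
        simp only [Matrix.mul_assoc]
    _ = (w j k')ᴴ * x * w j k' := by rw [hw.conjTranspose_mul_self, Matrix.one_mul]

theorem conjTranspose_mul_mul_of_commute_of_ne (hw : IsBlockFrame N w)
    (hx : ∀ z ∈ N, Commute x z) {i i' : (j : J) × R j} (hne : i ≠ i') :
    (w i.1 i.2)ᴴ * x * w i'.1 i'.2 = 0 := by
  calc (w i.1 i.2)ᴴ * x * w i'.1 i'.2
      = (w i.1 i.2)ᴴ * (x * (w i'.1 i'.2 * (w i'.1 i'.2)ᴴ)) * w i'.1 i'.2 := by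
        simp only [Matrix.mul_assoc, hw.conjTranspose_mul_self, Matrix.mul_one]
    _ = (w i.1 i.2)ᴴ * w i'.1 i'.2 * ((w i'.1 i'.2)ᴴ * x * w i'.1 i'.2) := by
        rw [(hx _ (hw.mul_conjTranspose_mem _ _ _)).eq]
        simp only [Matrix.mul_assoc]
    _ = 0 := by rw [hw.conjTranspose_mul_of_ne hne, Matrix.zero_mul]

theorem conjTranspose_frameMatrix_mul (hw : IsBlockFrame N w) :
    (frameMatrix w)ᴴ * frameMatrix w = 1 := by
  rw [← hw.sum_mul_conjTranspose]
  ext b b'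
  rw [mul_apply, Fintype.sum_sigma, Matrix.sum_apply]
  refine Finset.sum_congr rfl fun j _ => ?_
  rw [Fintype.sum_prod_type_right, Matrix.sum_apply]
  simp only [mul_apply, frameMatrix, conjTranspose_apply, of_apply, star_star]

variable [DecidableEq J]

theorem exists_conj_eq_one_kronecker (hw : IsBlockFrame N w) (hx : x ∈ N) :
    ∃ y : (j : J) → Matrix (R j) (R j) ℂ, frameMatrix w * x * (frameMatrix w)ᴴ =
      blockDiagonal' fun j => kronecker (1 : Matrix (L j) (L j) ℂ) (y j) := by
  choose c hc using hw.exists_smul_one_eq x hx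
  refine ⟨fun j => Matrix.of (c j), ?_⟩
  ext ⟨j, a, k⟩ ⟨j', a', k'⟩
  rw [frameMatrix_mul_mul_conjTranspose_apply]
  by_cases hj : j = j'
  · subst hj
    rw [hc, blockDiagonal'_apply_eq, kronecker, kroneckerMap_apply]
    exact mul_comm _ _
  · rw [hw.mul_mul_eq_zero x hx hj, blockDiagonal'_apply_ne _ _ _ hj, Matrix.zero_apply]

variable [∀ j, DecidableEq (R j)]

theorem frameMatrix_mul_conjTranspose (hw : IsBlockFrame N w) :
    frameMatrix w * (frameMatrix w)ᴴ = 1 := by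
  ext i i'
  have hentry := frameMatrix_mul_mul_conjTranspose_apply w 1 i i'
  rw [Matrix.mul_one, Matrix.mul_one] at hentry
  rw [hentry]
  obtain ⟨j, a, k⟩ := i
  obtain ⟨j', a', k'⟩ := i'
  by_cases h : (⟨j, k⟩ : (j : J) × R j) = ⟨j', k'⟩
  · obtain ⟨rfl, h⟩ := Sigma.mk.inj h
    obtain rfl := eq_of_heq h
    simp [hw.conjTranspose_mul_self, one_apply]
  · rw [hw.conjTranspose_mul_of_ne (i := ⟨j, k⟩) (i' := ⟨j', k'⟩) h, one_apply_ne]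
    · rfl
    · rintro ⟨⟩
      exact h rfl

theorem exists_conj_eq_kronecker_one (hw : IsBlockFrame N w) [∀ j, Nonempty (R j)]
    (hx : ∀ z ∈ N, Commute x z) :
    ∃ y : (j : J) → Matrix (L j) (L j) ℂ, frameMatrix w * x * (frameMatrix w)ᴴ =
      blockDiagonal' fun j => kronecker (y j) (1 : Matrix (R j) (R j) ℂ) := by
  obtain ⟨k₀⟩ : Nonempty ((j : J) → R j) := inferInstance
  refine ⟨fun j => (w j (k₀ j))ᴴ * x * w j (k₀ j), ?_⟩
  ext ⟨j, a, k⟩ ⟨j', a', k'⟩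
  rw [frameMatrix_mul_mul_conjTranspose_apply]
  by_cases h : (⟨j, k⟩ : (j : J) × R j) = ⟨j', k'⟩
  · obtain ⟨rfl, h⟩ := Sigma.mk.inj h
    obtain rfl := eq_of_heq h
    rw [hw.conjTranspose_mul_mul_of_commute hx j k (k₀ j), blockDiagonal'_apply_eq, kronecker,
      kroneckerMap_apply, one_apply_eq, mul_one]
  · rw [hw.conjTranspose_mul_mul_of_commute_of_ne hx (i := ⟨j, k⟩) (i' := ⟨j', k'⟩) h]
    by_cases hj : j = j'
    · subst hj
      rw [blockDiagonal'_apply_eq, kronecker, kroneckerMap_apply,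
        one_apply_ne fun hk : k = k' => h (by rw [hk]), mul_zero, Matrix.zero_apply]
    · rw [blockDiagonal'_apply_ne _ _ _ hj, Matrix.zero_apply]

end IsBlockFrame

theorem MvNEquivalent.exists_isometry {ℓ : Type*} [Fintype ℓ] [DecidableEq ℓ]
    {p : Matrix n n ℂ} {E : Matrix n ℓ ℂ} (h : MvNEquivalent N p (E * Eᴴ))
    (hp : IsIdempotentElem p) (hE : Eᴴ * E = 1) :
    ∃ w : Matrix n ℓ ℂ, wᴴ * w = 1 ∧ w * wᴴ = p ∧ w * Eᴴ ∈ N := by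
  obtain ⟨u, hu, huE, hup⟩ := h
  have huE' : u * (E * Eᴴ) = u := by
    rw [← huE, ← Matrix.mul_assoc, mul_conjTranspose_mul_self_eq (hup ▸ hp)]
  refine ⟨u * E, ?_, ?_, ?_⟩
  · calc (u * E)ᴴ * (u * E) = Eᴴ * (uᴴ * u) * E := by
          simp only [conjTranspose_mul, Matrix.mul_assoc]
      _ = 1 := by rw [huE, ← Matrix.mul_assoc, hE, Matrix.one_mul, hE]
  · calc u * E * (u * E)ᴴ = u * (E * Eᴴ) * uᴴ := by
          simp only [conjTranspose_mul, Matrix.mul_assoc]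
      _ = p := by rw [huE', hup]
  · rwa [Matrix.mul_assoc, huE']

theorem IsMinimalDecomposition.isBlockFrame {ι : Type*} [Fintype ι] {P : ι → Matrix n n ℂ}
    (hP : IsMinimalDecomposition N P 1) (π : (j : J) × R j ≃ ι) {E : (j : J) → Matrix n (L j) ℂ}
    (hE : ∀ j, (E j)ᴴ * E j = 1) (hEmin : ∀ j, IsMinimalProjection N (E j * (E j)ᴴ))
    (hw : ∀ j k, (w j k)ᴴ * w j k = 1) (hwP : ∀ j k, w j k * (w j k)ᴴ = P (π ⟨j, k⟩))
    (hwE : ∀ j k, w j k * (E j)ᴴ ∈ N)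
    (hclass : ∀ i i', MvNEquivalent N (P (π i)) (P (π i')) → i.1 = i'.1) : IsBlockFrame N w := by
  have hcut (x : Matrix n n ℂ) (i i' : (j : J) × R j) : (w i.1 i.2)ᴴ * x * w i'.1 i'.2 =
      (w i.1 i.2)ᴴ * (P (π i) * x * P (π i')) * w i'.1 i'.2 := by
    rw [conjTranspose_mul_mul_eq_conj_range (hw _ _) (hw _ _), hwP, hwP]
  refine ⟨hw, fun {i i'} hne => ?_, ?_, fun j k k' => ?_, fun x hx j k k' => ?_,
    fun x hx j j' hj k k' => ?_⟩
  · have := hcut 1 i i'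
    rwa [Matrix.mul_one, Matrix.mul_one, hP.pairwise_mul_eq_zero (π.injective.ne hne),
      Matrix.mul_zero, Matrix.zero_mul] at this
  · simp only [hwP]
    rw [← Fintype.sum_sigma', Equiv.sum_comp π P, hP.sum_eq]
  · have hprod : w j k * (w j k')ᴴ = w j k * (E j)ᴴ * (w j k' * (E j)ᴴ)ᴴ := by
      rw [conjTranspose_mul, conjTranspose_conjTranspose, Matrix.mul_assoc,
        ← Matrix.mul_assoc (E j)ᴴ, hE, Matrix.one_mul]
    rw [hprod]
    exact mul_mem (hwE j k) (star_mem (hwE j k'))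
  · obtain ⟨c, hc⟩ := (hEmin j).exists_smul_eq _
      (mul_mem (mul_mem (star_mem (hwE j k)) hx) (hwE j k'))
    refine ⟨c, ?_⟩
    have hcorner : (w j k)ᴴ * x * w j k' = (E j)ᴴ * (E j * (E j)ᴴ *
        (star (w j k * (E j)ᴴ) * x * (w j k' * (E j)ᴴ)) * (E j * (E j)ᴴ)) * E j := by
      rw [← conjTranspose_mul_mul_eq_conj_range (hE j) (hE j)]
      calc (w j k)ᴴ * x * w j k' = (E j)ᴴ * E j * ((w j k)ᴴ * x * w j k') * ((E j)ᴴ * E j) := by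
            rw [hE, Matrix.one_mul, Matrix.mul_one]
        _ = _ := by
            simp only [star_eq_conjTranspose, conjTranspose_mul, conjTranspose_conjTranspose,
              Matrix.mul_assoc]
    rw [hcorner, hc, Matrix.mul_smul, Matrix.smul_mul, ← Matrix.mul_assoc, hE, Matrix.one_mul, hE]
  · have hzero : P (π ⟨j, k⟩) * x * P (π ⟨j', k'⟩) = 0 := by
      by_contra hne
      exact hj (hclass _ _ ((hP.isMinimalProjection _).mvNEquivalent_of_mul_mul_ne_zero
        (hP.isMinimalProjection _) hx hne))
    rw [hcut x ⟨j, k⟩ ⟨j', k'⟩, hzero, Matrix.mul_zero, Matrix.zero_mul]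

/-- Murray–von Neumann equivalence, on the indices of a family of projections in `N`. -/
def mvNSetoid {ι : Type*} (N : StarSubalgebra ℂ (Matrix n n ℂ)) {P : ι → Matrix n n ℂ}
    (hmem : ∀ i, P i ∈ N) (hP : ∀ i, IsStarProjection (P i)) : Setoid ι where
  r i i' := MvNEquivalent N (P i) (P i')
  iseqv :=
    { refl := fun i => MvNEquivalent.refl (hmem i) (hP i)
      symm := MvNEquivalent.symm
      trans := MvNEquivalent.trans (hP _).isIdempotentElem (hP _).isIdempotentElem }

theorem exists_isBlockFrame (N : StarSubalgebra ℂ (Matrix n n ℂ)) :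
    ∃ (J : Type) (_ : Fintype J) (_ : DecidableEq J) (l r : J → ℕ)
      (w : (j : J) → Fin (r j) → Matrix n (Fin (l j)) ℂ),
      IsBlockFrame N w ∧ (∀ j, 0 < l j) ∧ ∀ j, 0 < r j := by
  classical
  obtain ⟨ι, _, P, hP⟩ := exists_isMinimalDecomposition (one_mem N) (.one _)
  have hproj i := (hP.isMinimalProjection i).isStarProjection
  let equivalence := mvNSetoid N (fun i => (hP.isMinimalProjection i).mem) hproj
  let J := Quotient equivalence
  choose l E hE hEP using fun j : J => exists_isometry_of_isStarProjection (hproj j.out)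
  let r (j : J) := Fintype.card {i // (⟦i⟧ : J) = j}
  let e (j : J) : Fin (r j) ≃ {i // (⟦i⟧ : J) = j} := (Fintype.equivFin _).symm
  let π : (j : J) × Fin (r j) ≃ ι :=
    (Equiv.sigmaCongrRight e).trans (Equiv.sigmaFiberEquiv (Quotient.mk equivalence))
  have hπ (i) : (⟦π i⟧ : J) = i.1 := (e i.1 i.2).2
  have hequiv (j k) : MvNEquivalent N (P (π ⟨j, k⟩)) (E j * (E j)ᴴ) := by
    rw [hEP]
    exact Quotient.exact ((hπ ⟨j, k⟩).trans j.out_eq.symm)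
  choose w hw hwP hwE using fun j k =>
    (hequiv j k).exists_isometry (hproj _).isIdempotentElem (hE j)
  have hframe : IsBlockFrame N w := hP.isBlockFrame π hE
    (fun j => hEP j ▸ hP.isMinimalProjection _) hw hwP hwE
    fun i i' h => (hπ i).symm.trans ((Quotient.sound h).trans (hπ i'))
  refine ⟨J, inferInstance, inferInstance, l, r, w, hframe, fun j => ?_, fun j => ?_⟩
  · refine Nat.pos_of_ne_zero fun hl => (hP.isMinimalProjection j.out).ne_zero ?_
    have : IsEmpty (Fin (l j)) := hl ▸ Fin.isEmpty
    rw [← hEP]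
    ext b b'
    rw [mul_apply, Finset.univ_eq_empty, Finset.sum_empty, Matrix.zero_apply]
  · exact Fintype.card_pos_iff.mpr ⟨j.out, j.out_eq⟩

end BlockFrames

/-! ### Normalization of positive product matrices -/

section Normalization

variable {L R : Type*}

theorem partialTrace_refl_kronecker [Fintype R] (Λ : Matrix L L ℂ) (Γ : Matrix R R ℂ) :
    partialTrace (Equiv.refl (L × R)) (kronecker Λ Γ) = Γ.trace • Λ := by
  ext i i'
  rw [partialTrace_apply, Matrix.smul_apply, smul_eq_mul, trace, Finset.sum_mul]
  exact Finset.sum_congr rfl fun k _ => mul_comm _ _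

theorem partialTrace_prodComm_kronecker [Fintype L] (Λ : Matrix L L ℂ) (Γ : Matrix R R ℂ) :
    partialTrace (Equiv.prodComm L R) (kronecker Λ Γ) = Λ.trace • Γ := by
  ext k k'
  rw [partialTrace_apply, Matrix.smul_apply, smul_eq_mul, trace, Finset.sum_mul]
  rfl

variable [Fintype L] [DecidableEq L] [Fintype R] [DecidableEq R]

theorem IsState.kronecker {m n : Type*} [Fintype m] [DecidableEq m] [Fintype n] [DecidableEq n]
    {M : Matrix m m ℂ} {N : Matrix n n ℂ} (hM : IsState M) (hN : IsState N) :
    IsState (kronecker M N) :=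
  ⟨hM.1.kronecker hN.1, (trace_kronecker M N).trans (by rw [hM.2, hN.2, mul_one])⟩

theorem IsState.nonempty {n : Type*} [Fintype n] [DecidableEq n] {M : Matrix n n ℂ}
    (hM : IsState M) : Nonempty n := by
  by_contra hempty
  rw [not_nonempty_iff] at hempty
  exact zero_ne_one ((trace_eq_zero_of_isEmpty M).symm.trans hM.2)

theorem exists_isState (n : Type*) [Fintype n] [DecidableEq n] [Nonempty n] :
    ∃ M : Matrix n n ℂ, IsState M := by
  obtain ⟨i⟩ := ‹Nonempty n›
  refine ⟨diagonal (Pi.single i 1), PosSemidef.diagonal (Pi.single_nonneg.mpr zero_le_one), ?_⟩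
  rw [trace_diagonal, Finset.sum_pi_single', if_pos (Finset.mem_univ i)]

theorem isState_inv_trace_smul {Λ : Matrix L L ℂ} {c : ℂ} (hΛ : (c • Λ).PosSemidef) (hc : c ≠ 0)
    (htr : Λ.trace ≠ 0) : IsState (Λ.trace⁻¹ • Λ) := by
  refine ⟨?_, by rw [trace_smul, smul_eq_mul, inv_mul_cancel₀ htr]⟩
  have hinv : (0 : ℂ) ≤ (c • Λ).trace⁻¹ := by
    rw [Complex.eq_re_of_ofReal_le hΛ.trace_nonneg]
    exact_mod_cast inv_nonneg.mpr (Complex.nonneg_iff.mp hΛ.trace_nonneg).1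
  have heq : Λ.trace⁻¹ • Λ = (c • Λ).trace⁻¹ • (c • Λ) := by
    rw [trace_smul, smul_smul, smul_eq_mul, _root_.mul_inv_rev, mul_assoc, inv_mul_cancel₀ hc,
      mul_one]
  rw [heq]
  exact hΛ.smul hinv

/-- The factors of a positive product need not be positive, only proportional to positive
matrices. -/
theorem exists_isState_kronecker_eq_smul [Nonempty L] [Nonempty R] {Λ : Matrix L L ℂ}
    {Γ : Matrix R R ℂ} (hpos : (kronecker Λ Γ).PosSemidef) :
    ∃ (p : ℝ) (M : Matrix L L ℂ) (N : Matrix R R ℂ), 0 ≤ p ∧ IsState M ∧ IsState N ∧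
      kronecker Λ Γ = (p : ℂ) • kronecker M N := by
  have htrace : (kronecker Λ Γ).trace = Λ.trace * Γ.trace := trace_kronecker Λ Γ
  have hnonneg := hpos.trace_nonneg
  by_cases hzero : (kronecker Λ Γ).trace = 0
  · obtain ⟨M, hM⟩ := exists_isState L
    obtain ⟨N, hN⟩ := exists_isState R
    refine ⟨0, M, N, le_rfl, hM, hN, ?_⟩
    rw [hpos.trace_eq_zero_iff.mp hzero, Complex.ofReal_zero, zero_smul]
  · have hΛ : Λ.trace ≠ 0 := fun h => hzero (by rw [htrace, h, zero_mul])
    have hΓ : Γ.trace ≠ 0 := fun h => hzero (by rw [htrace, h, mul_zero])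
    refine ⟨(kronecker Λ Γ).trace.re, Λ.trace⁻¹ • Λ, Γ.trace⁻¹ • Γ,
      (Complex.nonneg_iff.mp hnonneg).1, ?_, ?_, ?_⟩
    · refine isState_inv_trace_smul (c := Γ.trace) ?_ hΓ hΛ
      exact partialTrace_refl_kronecker Λ Γ ▸ posSemidef_partialTrace _ hpos
    · refine isState_inv_trace_smul (c := Λ.trace) ?_ hΛ hΓ
      exact partialTrace_prodComm_kronecker Λ Γ ▸ posSemidef_partialTrace _ hpos
    · rw [← Complex.eq_re_of_ofReal_le hnonneg, htrace]
      simp only [kronecker, smul_kronecker, kronecker_smul, smul_smul]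
      rw [mul_assoc, mul_inv_cancel_left₀ hΓ, mul_inv_cancel₀ hΛ, one_smul]

end Normalization

/-! ### The structure of saturating states -/

section MiddleBlocks

variable {A B C : Type*}

/-- The block in position `(α, α')` of a matrix on `A ⊗ B`, an operator on `B`. -/
abbrev rightBlock (M : Matrix (A × B) (A × B) ℂ) (α α' : A) : Matrix B B ℂ :=
  M.submatrix (fun b => (α, b)) fun b => (α', b)

/-- The block in position `(c, c')` of a matrix on `B ⊗ C`, an operator on `B`. -/
abbrev leftBlock (M : Matrix (B × C) (B × C) ℂ) (c c' : C) : Matrix B B ℂ :=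
  M.submatrix (fun b => (b, c)) fun b => (b, c')

/-- The block in position `((α, c), (α', c'))` of a matrix on `A ⊗ B ⊗ C`, an operator on `B`. -/
abbrev middleBlock (M : Matrix (A × B × C) (A × B × C) ℂ) (α α' : A) (c c' : C) : Matrix B B ℂ :=
  M.submatrix (fun b => (α, b, c)) fun b => (α', b, c')

variable [Fintype A]

theorem sum_middleBlock (ρ : Matrix (A × B × C) (A × B × C) ℂ) (c c' : C) :
    ∑ α, middleBlock ρ α α c c' = leftBlock (marginalBC ρ) c c' := by
  ext b b'
  rw [Matrix.sum_apply]
  rfl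

theorem sum_rightBlock_marginalAB [Fintype C] (ρ : Matrix (A × B × C) (A × B × C) ℂ) :
    ∑ α, rightBlock (marginalAB ρ) α α = marginalB ρ := by
  ext b b'
  rw [Matrix.sum_apply]
  exact Finset.sum_comm

variable [Fintype B]

theorem rightBlock_mul (M N : Matrix (A × B) (A × B) ℂ) (α α' : A) :
    rightBlock (M * N) α α' = ∑ β, rightBlock M α β * rightBlock N β α' := by
  ext b b'
  rw [Matrix.sum_apply]
  exact Fintype.sum_prod_type _

variable [Fintype C] [DecidableEq B] {ρ : Matrix (A × B × C) (A × B × C) ℂ}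

theorem exists_commuting_middleBlock_eq_of_sum {a : Matrix (A × B) (A × B) ℂ} {d : Matrix B B ℂ}
    (ha : a.IsHermitian) (haa : a * a = marginalAB ρ)
    (hd : d = cfc (fun x : ℝ => (√x)⁻¹) (marginalB ρ))
    (hmiddle : ∀ α α' c c', middleBlock ρ α α' c c' =
      ∑ β, rightBlock a α β * (d * leftBlock (marginalBC ρ) c c' * d) * rightBlock a β α') :
    ∃ (N : StarSubalgebra ℂ (Matrix B B ℂ)) (X : A → A → Matrix B B ℂ) (Y : C → C → Matrix B B ℂ),
      (∀ α α', ∀ z ∈ N, Commute (X α α') z) ∧ (∀ c c', Y c c' ∈ N) ∧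
      ∀ α α' c c', middleBlock ρ α α' c c' = X α α' * Y c c' := by
  have hblock (α β) : rightBlock a β α = (rightBlock a α β)ᴴ := by
    rw [conjTranspose_submatrix, ha.eq]
  have hsum : ∑ i : A × A, rightBlock a i.1 i.2 * (rightBlock a i.1 i.2)ᴴ = marginalB ρ := by
    simp only [Fintype.sum_prod_type, ← hblock, ← rightBlock_mul, haa, sum_rightBlock_marginalAB]
  have hfixed (c c') : ∑ i : A × A, rightBlock a i.1 i.2 *
      (d * leftBlock (marginalBC ρ) c c' * d) * (rightBlock a i.1 i.2)ᴴ =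
        leftBlock (marginalBC ρ) c c' := by
    simp only [Fintype.sum_prod_type, ← hblock, ← hmiddle, sum_middleBlock]
  have hfactor := exists_commuting_factorization (τ := Equiv.prodComm A A) (T := marginalB ρ)
    (d := d) (a := fun i => rightBlock a i.1 i.2) fun i => hblock i.1 i.2
  obtain ⟨N, X, Y, hX, hY⟩ := hfactor hsum hd
  have hcc (c c') := hY (leftBlock (marginalBC ρ) c c') (hfixed c c')
  refine ⟨N, fun α α' => ∑ β, X (α, β) (β, α'), fun c c' => Y (leftBlock (marginalBC ρ) c c'),
    fun α α' z hz => Commute.sum_left _ _ _ fun β _ => hX _ _ z hz,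
    fun c c' => (hcc c c').1, fun α α' c c' => ?_⟩
  rw [hmiddle, Finset.sum_mul]
  exact Finset.sum_congr rfl fun β _ => (hcc c c').2 (α, β) (β, α')

variable [DecidableEq C]

theorem ampliation_refl_apply (M : Matrix B B ℂ) (b b' : B) (c c' : C) :
    ampliation (Equiv.refl (B × C)) M (b, c) (b', c') = if c = c' then M b b' else 0 :=
  mul_boole _ _

theorem leftBlock_ampliation_mul_mul (d : Matrix B B ℂ) (G : Matrix (B × C) (B × C) ℂ)
    (c c' : C) :
    leftBlock (ampliation (Equiv.refl (B × C)) d * G * ampliation (Equiv.refl (B × C)) d) c c' =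
      d * leftBlock G c c' * d := by
  ext b b'
  simp [mul_apply, ampliation_refl_apply, Fintype.sum_prod_type]

variable [DecidableEq A]

theorem ampliation_prodComm_apply (M : Matrix (B × C) (B × C) ℂ) (α α' : A) (k k' : B × C) :
    ampliation (Equiv.prodComm A (B × C)) M (α, k) (α', k') = if α = α' then M k k' else 0 :=
  mul_boole _ _

theorem ampliation_prodAssoc_symm_apply (M : Matrix (A × B) (A × B) ℂ) (α α' : A) (b b' : B)
    (c c' : C) : ampliation (Equiv.prodAssoc A B C).symm M (α, b, c) (α', b', c') =
      if c = c' then M (α, b) (α', b') else 0 :=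
  mul_boole _ _

theorem middleBlock_ampliation_mul_mul (a : Matrix (A × B) (A × B) ℂ)
    (K : Matrix (B × C) (B × C) ℂ) (α α' : A) (c c' : C) :
    middleBlock (ampliation (Equiv.prodAssoc A B C).symm a *
        ampliation (Equiv.prodComm A (B × C)) K * ampliation (Equiv.prodAssoc A B C).symm a)
        α α' c c' =
      ∑ β, rightBlock a α β * leftBlock K c c' * rightBlock a β α' := by
  ext b b'
  simp [mul_apply, ampliation_prodComm_apply, ampliation_prodAssoc_symm_apply,
    Fintype.sum_prod_type, Matrix.sum_apply]

theorem middleBlock_eq_sum {a : Matrix (A × B) (A × B) ℂ} {d : Matrix B B ℂ}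
    (hρ : ρ = ampliation (Equiv.prodAssoc A B C).symm a *
      ampliation (Equiv.prodComm A (B × C)) (ampliation (Equiv.refl (B × C)) d *
        marginalBC ρ * ampliation (Equiv.refl (B × C)) d) *
      ampliation (Equiv.prodAssoc A B C).symm a) (α α' : A) (c c' : C) :
    middleBlock ρ α α' c c' =
      ∑ β, rightBlock a α β * (d * leftBlock (marginalBC ρ) c c' * d) * rightBlock a β α' := by
  conv_lhs => rw [hρ]
  rw [middleBlock_ampliation_mul_mul, leftBlock_ampliation_mul_mul]

theorem exists_commuting_middleBlock_eq_of_saturation (hρ : ρ.PosSemidef)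
    (hsat : S3AB ρ + S3BC ρ = S3ABC ρ + S3B ρ) :
    ∃ (N : StarSubalgebra ℂ (Matrix B B ℂ)) (X : A → A → Matrix B B ℂ) (Y : C → C → Matrix B B ℂ),
      (∀ α α', ∀ z ∈ N, Commute (X α α') z) ∧ (∀ c c', Y c c' ∈ N) ∧
      ∀ α α' c c', middleBlock ρ α α' c c' = X α α' * Y c c' :=
  exists_commuting_middleBlock_eq_of_sum (cfc_predicate Real.sqrt (marginalAB ρ))
    (cfc_sqrt_mul_self (posSemidef_partialTrace _ hρ)) rfl
    (middleBlock_eq_sum (eq_sqrt_marginalAB_mul_of_saturation hρ hsat))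

end MiddleBlocks

section BlockProducts

variable {A B C J : Type*} [DecidableEq J] {L R : J → Type*}

theorem conjTranspose_mul_blockDiagonal'_mul_apply [Fintype J] [∀ j, Fintype (L j)]
    [∀ j, Fintype (R j)] (U : Matrix ((j : J) × (L j × R j)) B ℂ)
    (D : (j : J) → Matrix (L j × R j) (L j × R j) ℂ) (b b' : B) :
    (Uᴴ * blockDiagonal' D * U) b b' = ∑ j, ∑ l₁, ∑ r₁, ∑ l₂, ∑ r₂,
      star (U ⟨j, (l₁, r₁)⟩ b) * D j (l₁, r₁) (l₂, r₂) * U ⟨j, (l₂, r₂)⟩ b' := by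
  rw [Matrix.mul_assoc, mul_apply, Fintype.sum_sigma]
  refine Finset.sum_congr rfl fun j _ => ?_
  rw [Fintype.sum_prod_type]
  refine Finset.sum_congr rfl fun l₁ _ => Finset.sum_congr rfl fun r₁ _ => ?_
  rw [conjTranspose_apply, mul_apply, Fintype.sum_sigma, Finset.sum_eq_single j]
  · rw [Fintype.sum_prod_type]
    simp only [Finset.mul_sum, blockDiagonal'_apply_eq, mul_assoc]
  · intro j' _ hj
    refine Finset.sum_eq_zero fun k _ => ?_
    rw [blockDiagonal'_apply_ne _ _ _ hj.symm, zero_mul]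
  · simp

variable [Fintype B] {ρ : Matrix (A × B × C) (A × B × C) ℂ} {U : Matrix ((j : J) × (L j × R j)) B ℂ}
  {Λ : (j : J) → Matrix (A × L j) (A × L j) ℂ} {Γ : (j : J) → Matrix (R j × C) (R j × C) ℂ}

/-- In the basis of `B` given by `U`, the operator `ρ` on `A ⊗ B ⊗ C` is `⊕ j, Λ j ⊗ Γ j`. This is
expressed through the blocks of `ρ`, so that it involves only operators on `B`. -/
def IsBlockProduct (U : Matrix ((j : J) × (L j × R j)) B ℂ) (ρ : Matrix (A × B × C) (A × B × C) ℂ)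
    (Λ : (j : J) → Matrix (A × L j) (A × L j) ℂ) (Γ : (j : J) → Matrix (R j × C) (R j × C) ℂ) :
    Prop :=
  ∀ α α' c c', U * middleBlock ρ α α' c c' * Uᴴ =
    blockDiagonal' fun j => kronecker (rightBlock (Λ j) α α') (leftBlock (Γ j) c c')

theorem exists_isBlockProduct [DecidableEq B] [Fintype J] [∀ j, Fintype (L j)]
    [∀ j, DecidableEq (L j)] [∀ j, Fintype (R j)] [∀ j, Nonempty (R j)]
    {N : StarSubalgebra ℂ (Matrix B B ℂ)} {w : (j : J) → R j → Matrix B (L j) ℂ}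
    (hw : IsBlockFrame N w) {X : A → A → Matrix B B ℂ} {Y : C → C → Matrix B B ℂ}
    (hX : ∀ α α', ∀ z ∈ N, Commute (X α α') z) (hY : ∀ c c', Y c c' ∈ N)
    (hXY : ∀ α α' c c', middleBlock ρ α α' c c' = X α α' * Y c c') :
    ∃ (Λ : (j : J) → Matrix (A × L j) (A × L j) ℂ) (Γ : (j : J) → Matrix (R j × C) (R j × C) ℂ),
      IsBlockProduct (frameMatrix w) ρ Λ Γ := by
  classical
  choose x hx using fun α α' => hw.exists_conj_eq_kronecker_one (hX α α')
  choose y hy using fun c c' => hw.exists_conj_eq_one_kronecker (hY c c')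
  refine ⟨fun j => Matrix.of fun p q => x p.1 q.1 j p.2 q.2,
    fun j => Matrix.of fun p q => y p.2 q.2 j p.1 q.1, fun α α' c c' => ?_⟩
  set U := frameMatrix w
  calc U * middleBlock ρ α α' c c' * Uᴴ = U * X α α' * (Uᴴ * U) * Y c c' * Uᴴ := by
        rw [hXY, hw.conjTranspose_frameMatrix_mul, Matrix.mul_one]
        simp only [Matrix.mul_assoc]
    _ = (U * X α α' * Uᴴ) * (U * Y c c' * Uᴴ) := by simp only [Matrix.mul_assoc]
    _ = blockDiagonal' fun j => kronecker (x α α' j) (y c c' j) := by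
        rw [hx, hy, ← blockDiagonal'_mul]
        simp only [kronecker, ← mul_kronecker_mul, Matrix.mul_one, Matrix.one_mul]

namespace IsBlockProduct

theorem kronecker_apply (h : IsBlockProduct U ρ Λ Γ) (j : J) (α α' : A) (c c' : C) (l₁ l₂ : L j)
    (r₁ r₂ : R j) : kronecker (Λ j) (Γ j) ((α, l₁), (r₁, c)) ((α', l₂), (r₂, c')) =
      (U * middleBlock ρ α α' c c' * Uᴴ) ⟨j, (l₁, r₁)⟩ ⟨j, (l₂, r₂)⟩ := by
  rw [h, blockDiagonal'_apply_eq]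
  rfl

theorem apply_eq_sum [DecidableEq B] [Fintype J] [∀ j, Fintype (L j)] [∀ j, Fintype (R j)]
    (h : IsBlockProduct U ρ Λ Γ) (hU : Uᴴ * U = 1) (α α' : A) (b b' : B) (c c' : C) :
    ρ (α, b, c) (α', b', c') = ∑ j, ∑ l₁, ∑ r₁, ∑ l₂, ∑ r₂, star (U ⟨j, (l₁, r₁)⟩ b) *
      kronecker (Λ j) (Γ j) ((α, l₁), (r₁, c)) ((α', l₂), (r₂, c')) * U ⟨j, (l₂, r₂)⟩ b' := by
  have hblock : middleBlock ρ α α' c c' = Uᴴ * (blockDiagonal' fun j =>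
      kronecker (rightBlock (Λ j) α α') (leftBlock (Γ j) c c')) * U := by
    calc middleBlock ρ α α' c c' = Uᴴ * U * middleBlock ρ α α' c c' * (Uᴴ * U) := by
          rw [hU, Matrix.one_mul, Matrix.mul_one]
      _ = Uᴴ * (U * middleBlock ρ α α' c c' * Uᴴ) * U := by simp only [Matrix.mul_assoc]
      _ = _ := by rw [h]
  exact (congrFun₂ hblock b b').trans (conjTranspose_mul_blockDiagonal'_mul_apply U _ b b')

theorem posSemidef_kronecker [Finite A] [Finite C] (h : IsBlockProduct U ρ Λ Γ)
    (hρ : ρ.PosSemidef) (j : J) [Finite (L j)] [Finite (R j)] :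
    (kronecker (Λ j) (Γ j)).PosSemidef := by
  classical
  have := Fintype.ofFinite A
  have := Fintype.ofFinite C
  -- The operator `1_A ⊗ U_j ⊗ 1_C`, with its rows reordered.
  let F : Matrix ((A × L j) × (R j × C)) (A × B × C) ℂ := Matrix.of fun p q =>
    (1 : Matrix A A ℂ) p.1.1 q.1 * (1 : Matrix C C ℂ) p.2.2 q.2.2 * U ⟨j, p.1.2, p.2.1⟩ q.2.1
  have hcompression : kronecker (Λ j) (Γ j) = F * ρ * Fᴴ := by
    ext ⟨⟨α, l₁⟩, r₁, c⟩ ⟨⟨α', l₂⟩, r₂, c'⟩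
    rw [h.kronecker_apply]
    simp [F, mul_apply, Fintype.sum_prod_type, one_apply, apply_ite (starRingEnd ℂ), mul_ite]
  rw [hcompression]
  exact hρ.mul_mul_conjTranspose_same F

theorem sum_trace_kronecker [Fintype A] [DecidableEq B] [Fintype C] [Fintype J]
    [∀ j, Fintype (L j)] [∀ j, Fintype (R j)] (h : IsBlockProduct U ρ Λ Γ) (hU : Uᴴ * U = 1) :
    ∑ j, (kronecker (Λ j) (Γ j)).trace = ρ.trace := by
  calc ∑ j, (kronecker (Λ j) (Γ j)).trace
      = ∑ j, ∑ α, ∑ c, ∑ l₁, ∑ r₁, kronecker (Λ j) (Γ j) ((α, l₁), r₁, c) ((α, l₁), r₁, c) := by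
        refine Finset.sum_congr rfl fun j _ => ?_
        simp only [trace, diag_apply, Fintype.sum_prod_type (α₁ := A × L j),
          Fintype.sum_prod_type (α₁ := A), Fintype.sum_prod_type_right (α₂ := C)]
        exact Finset.sum_congr rfl fun α _ => Finset.sum_comm
    _ = ∑ α, ∑ c, (U * middleBlock ρ α α c c * Uᴴ).trace := by
        rw [Finset.sum_comm]
        refine Finset.sum_congr rfl fun α _ => ?_
        rw [Finset.sum_comm]
        refine Finset.sum_congr rfl fun c _ => ?_
        simp only [trace, diag_apply, Fintype.sum_sigma, Fintype.sum_prod_type, h.kronecker_apply]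
    _ = ∑ α, ∑ c, (middleBlock ρ α α c c).trace := by
        simp only [trace_mul_comm _ Uᴴ, ← Matrix.mul_assoc, hU, Matrix.one_mul]
    _ = ρ.trace := by
        simp only [trace, diag_apply, Fintype.sum_prod_type (α₁ := A),
          Fintype.sum_prod_type_right (α₂ := C)]
        rfl

end IsBlockProduct

end BlockProducts

/-- **Proposition (Hayden–Jozsa–Petz–Winter).** A tripartite state saturating strong
subadditivity at pivot `B`, i.e. `S(AB) + S(BC) = S(ABC) + S(B)`, has the form
`ρ^{ABC} = ⊕_j p_j ρ_j^{A b_j^L} ⊗ ρ_j^{b_j^R C}` with respect to an orthogonal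
decomposition `H_B = ⊕_j H_{b_j^L} ⊗ H_{b_j^R}` of `B`'s Hilbert space.

The decomposition is encoded by a finite index type `J`, dimensions `l j`, `r j`
and a unitary change of basis `U : ⊕_j (ℂ^{l j} ⊗ ℂ^{r j}) → H_B` (unitarity being
`U * Uᴴ = 1` and `Uᴴ * U = 1`); the displayed entrywise identity says exactly
`ρ^{ABC} = (1_A ⊗ Uᴴ ⊗ 1_C) (⊕_j p_j ρL_j ⊗ ρR_j) (1_A ⊗ U ⊗ 1_C)`,
where the middle matrix is block diagonal in `j`. -/
theorem structure_of_SSA_saturating_states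
    {A B C : Type*} [Fintype A] [DecidableEq A] [Fintype B] [DecidableEq B]
    [Fintype C] [DecidableEq C]
    (ρ : Matrix (A × B × C) (A × B × C) ℂ) (hρ : IsState ρ)
    (hsat : S3AB ρ + S3BC ρ = S3ABC ρ + S3B ρ) :
    ∃ (J : Type) (_ : Fintype J) (_ : DecidableEq J) (l r : J → ℕ)
      (U : Matrix ((j : J) × (Fin (l j) × Fin (r j))) B ℂ)
      (p : J → ℝ)
      (ρL : (j : J) → Matrix (A × Fin (l j)) (A × Fin (l j)) ℂ)
      (ρR : (j : J) → Matrix (Fin (r j) × C) (Fin (r j) × C) ℂ),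
      U * U.conjTranspose = 1 ∧
      U.conjTranspose * U = 1 ∧
      (∀ j, 0 ≤ p j) ∧ (∑ j, p j = 1) ∧
      (∀ j, IsState (ρL j)) ∧ (∀ j, IsState (ρR j)) ∧
      (∀ a b c a' b' c', ρ (a, b, c) (a', b', c') =
        ∑ j, ∑ l₁, ∑ r₁, ∑ l₂, ∑ r₂,
          star (U ⟨j, (l₁, r₁)⟩ b) *
            ((p j : ℂ) * ρL j (a, l₁) (a', l₂) * ρR j (r₁, c) (r₂, c')) *
            U ⟨j, (l₂, r₂)⟩ b') := by
  obtain ⟨N, X, Y, hX, hY, hXY⟩ := exists_commuting_middleBlock_eq_of_saturation hρ.1 hsat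
  obtain ⟨J, _, _, l, r, w, hw, hl, hr⟩ := exists_isBlockFrame N
  have (j : J) : Nonempty (Fin (l j)) := Fin.pos_iff_nonempty.mp (hl j)
  have (j : J) : Nonempty (Fin (r j)) := Fin.pos_iff_nonempty.mp (hr j)
  obtain ⟨Λ, Γ, hΛΓ⟩ := exists_isBlockProduct hw hX hY hXY
  obtain ⟨⟨α₀, -, c₀⟩⟩ := hρ.nonempty
  have : Nonempty A := ⟨α₀⟩
  have : Nonempty C := ⟨c₀⟩
  choose p ρL ρR hp hL hR hLR using fun j =>
    exists_isState_kronecker_eq_smul (hΛΓ.posSemidef_kronecker hρ.1 j)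
  have hU := hw.conjTranspose_frameMatrix_mul
  refine ⟨J, inferInstance, inferInstance, l, r, frameMatrix w, p, ρL, ρR,
    hw.frameMatrix_mul_conjTranspose, hU, hp, ?_, hL, hR, fun a b c a' b' c' => ?_⟩
  · have hsum := (hΛΓ.sum_trace_kronecker hU).trans hρ.2
    simp only [hLR, trace_smul, ((hL _).kronecker (hR _)).2, smul_eq_mul, mul_one] at hsum
    exact_mod_cast hsum
  · simp only [hΛΓ.apply_eq_sum hU, hLR, Matrix.smul_apply, smul_eq_mul]
    simp only [kronecker, kroneckerMap_apply, mul_assoc]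
end

section
/- There exists a state ρ^{ABCD} of a quadripartite quantum system on finite-dimensional Hilbert spaces that saturates strong subadditivity for the triples ABC and ADB (i.e. I(A;C|B) = 0 and I(A;B|D) = 0) but satisfies I(C;D) = 0 and I(C;AB) = 1, so that I(C;D) < I(C;AB). One such state is ρ^{ABCD} = ½(|00⟩⟨00| + |11⟩⟨11|)^{BC} ⊗ |00⟩⟨00|^{AD} on four qubits. -/
/-!
A mixture of computational basis states is a classical probability distribution: its marginals are
again mixtures of basis states, labelled by the retained coordinates, and its entropies are Shannon
entropies. In the witness `B` and `C` both carry a copy of a fair bit, while `A` and `D` are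
constant. Saturation for `ABC` holds because `B` determines everything else, saturation for `ADB`
because `A` is constant; `D` knows nothing about the bit in `C`, whereas `AB` holds a copy of it.
-/

open scoped BigOperators ComplexOrder

section Quad

variable {A B C D : Type*} [Fintype A] [DecidableEq A] [Fintype B] [DecidableEq B]
  [Fintype C] [DecidableEq C] [Fintype D] [DecidableEq D]
  (ρ : Matrix (A × B × C × D) (A × B × C × D) ℂ)

/-- Entropies of the 15 marginals of a quadripartite state. -/
noncomputable def SA : ℝ :=
  vNEntropy (Matrix.of fun a a' : A => ∑ b, ∑ c, ∑ d, ρ (a, b, c, d) (a', b, c, d))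
noncomputable def SB : ℝ :=
  vNEntropy (Matrix.of fun b b' : B => ∑ a, ∑ c, ∑ d, ρ (a, b, c, d) (a, b', c, d))
noncomputable def SC : ℝ :=
  vNEntropy (Matrix.of fun c c' : C => ∑ a, ∑ b, ∑ d, ρ (a, b, c, d) (a, b, c', d))
noncomputable def SD : ℝ :=
  vNEntropy (Matrix.of fun d d' : D => ∑ a, ∑ b, ∑ c, ρ (a, b, c, d) (a, b, c, d'))
noncomputable def SAB : ℝ :=
  vNEntropy (Matrix.of fun p q : A × B => ∑ c, ∑ d, ρ (p.1, p.2, c, d) (q.1, q.2, c, d))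
noncomputable def SAC : ℝ :=
  vNEntropy (Matrix.of fun p q : A × C => ∑ b, ∑ d, ρ (p.1, b, p.2, d) (q.1, b, q.2, d))
noncomputable def SAD : ℝ :=
  vNEntropy (Matrix.of fun p q : A × D => ∑ b, ∑ c, ρ (p.1, b, c, p.2) (q.1, b, c, q.2))
noncomputable def SBC : ℝ :=
  vNEntropy (Matrix.of fun p q : B × C => ∑ a, ∑ d, ρ (a, p.1, p.2, d) (a, q.1, q.2, d))
noncomputable def SBD : ℝ :=
  vNEntropy (Matrix.of fun p q : B × D => ∑ a, ∑ c, ρ (a, p.1, c, p.2) (a, q.1, c, q.2))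
noncomputable def SCD : ℝ :=
  vNEntropy (Matrix.of fun p q : C × D => ∑ a, ∑ b, ρ (a, b, p.1, p.2) (a, b, q.1, q.2))
noncomputable def SABC : ℝ :=
  vNEntropy (Matrix.of fun p q : A × B × C =>
    ∑ d, ρ (p.1, p.2.1, p.2.2, d) (q.1, q.2.1, q.2.2, d))
noncomputable def SABD : ℝ :=
  vNEntropy (Matrix.of fun p q : A × B × D =>
    ∑ c, ρ (p.1, p.2.1, c, p.2.2) (q.1, q.2.1, c, q.2.2))
noncomputable def SACD : ℝ :=
  vNEntropy (Matrix.of fun p q : A × C × D =>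
    ∑ b, ρ (p.1, b, p.2.1, p.2.2) (q.1, b, q.2.1, q.2.2))
noncomputable def SBCD : ℝ :=
  vNEntropy (Matrix.of fun p q : B × C × D =>
    ∑ a, ρ (a, p.1, p.2.1, p.2.2) (a, q.1, q.2.1, q.2.2))
noncomputable def SABCD : ℝ := vNEntropy ρ

end Quad

/-- The Shannon entropy, in bits, of a finite family of weights `p`. The convention
`0 log 0 = 0` is the junk value `Real.logb 2 0 = 0`. -/
noncomputable def shannonEntropy {K : Type*} [Fintype K] (p : K → ℝ) : ℝ :=
  -∑ k, p k * Real.logb 2 (p k)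

theorem shannonEntropy_uniform (K : Type*) [Fintype K] [Nonempty K] :
    shannonEntropy (fun _ : K => 1 / (Fintype.card K : ℝ)) = Real.logb 2 (Fintype.card K) := by
  simp [shannonEntropy, Real.logb_inv]

theorem vNEntropy_diagonal {n : Type*} [Fintype n] [DecidableEq n] (d : n → ℝ) :
    vNEntropy (Matrix.diagonal fun i => (d i : ℂ)) = shannonEntropy d := by
  have hermitian : (Matrix.diagonal fun i => (d i : ℂ)).IsHermitian :=
    Matrix.isHermitian_diagonal_iff.2 fun i => Complex.conj_ofReal (d i)
  have eigenvalues_eq : Finset.univ.val.map (fun i => (d i : ℂ)) =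
      Finset.univ.val.map (fun i => (hermitian.eigenvalues i : ℂ)) := by
    have charpoly_ne_zero := (Matrix.charpoly_monic (Matrix.diagonal fun i => (d i : ℂ))).ne_zero
    rw [Matrix.charpoly_diagonal] at charpoly_ne_zero
    simpa [Matrix.charpoly_diagonal, Polynomial.roots_prod _ _ charpoly_ne_zero]
      using hermitian.roots_charpoly_eq_eigenvalues
  have sum_eq : ∑ i, d i * Real.logb 2 (d i) =
      ∑ i, hermitian.eigenvalues i * Real.logb 2 (hermitian.eigenvalues i) := by
    simpa only [Multiset.map_map, Function.comp_def, Complex.ofReal_re, Finset.sum_map_val] using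
      congrArg (fun s => (s.map fun z => z.re * Real.logb 2 z.re).sum) eigenvalues_eq
  rw [vNEntropy, dif_pos hermitian, shannonEntropy, sum_eq]

section BasisMixture

variable {K m n : Type*} [Fintype K] [DecidableEq n]

/-- The mixture `∑ k, p k • |x k⟩⟨x k|` of computational basis states, encoded by its diagonal;
the labels `x k` may repeat, in which case their weights add up. -/
noncomputable def basisMixture (p : K → ℝ) (x : K → n) : Matrix n n ℂ :=
  Matrix.diagonal fun i => ((∑ k, if x k = i then p k else 0 : ℝ) : ℂ)

theorem basisMixture_apply (p : K → ℝ) (x : K → n) (i j : n) :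
    basisMixture p x i j = ∑ k, if x k = i ∧ x k = j then (p k : ℂ) else 0 := by
  obtain rfl | hij := eq_or_ne i j
  · simp [basisMixture, apply_ite]
  · rw [basisMixture, Matrix.diagonal_apply_ne _ hij, Finset.sum_eq_zero]
    exact fun k _ => if_neg fun h => hij (h.1.symm.trans h.2)

variable [Fintype n]

theorem isState_basisMixture {p : K → ℝ} (hp : ∀ k, 0 ≤ p k) (hsum : ∑ k, p k = 1) (x : K → n) :
    IsState (basisMixture p x) := by
  constructor
  · refine Matrix.posSemidef_diagonal_iff.2 fun i => Complex.zero_le_real.2 ?_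
    exact Finset.sum_nonneg fun k _ => ite_nonneg (hp k) le_rfl
  · rw [basisMixture, Matrix.trace_diagonal, ← Complex.ofReal_sum, Finset.sum_comm]
    simp [hsum]

theorem vNEntropy_basisMixture (p : K → ℝ) (x : K → n) :
    vNEntropy (basisMixture p x) = shannonEntropy fun i => ∑ k, if x k = i then p k else 0 :=
  vNEntropy_diagonal _

theorem vNEntropy_basisMixture_const {p : K → ℝ} (hsum : ∑ k, p k = 1) (i : n) :
    vNEntropy (basisMixture p fun _ => i) = 0 := by
  rw [vNEntropy_basisMixture, shannonEntropy, Finset.sum_eq_single i] <;>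
    simp +contextual [hsum, eq_comm]

theorem vNEntropy_basisMixture_comp [Fintype m] [DecidableEq m] (p : K → ℝ) (x : K → m)
    {f : m → n} (hf : f.Injective) :
    vNEntropy (basisMixture p (f ∘ x)) = vNEntropy (basisMixture p x) := by
  simp only [vNEntropy_basisMixture, shannonEntropy, neg_inj, Function.comp_apply]
  refine (Fintype.sum_of_injective f hf _ _ (fun i hi => ?_) fun i => ?_).symm
  · have hne : ∀ k, f (x k) ≠ i := fun k hk => hi ⟨x k, hk⟩
    simp [hne]
  · simp [hf.eq_iff]

theorem vNEntropy_basisMixture_of_injective (p : K → ℝ) {x : K → n} (hx : x.Injective) :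
    vNEntropy (basisMixture p x) = shannonEntropy p := by
  classical
  calc vNEntropy (basisMixture p x)
      = vNEntropy (basisMixture p id) := vNEntropy_basisMixture_comp p id hx
    _ = shannonEntropy p := by simp [vNEntropy_basisMixture]

end BasisMixture

section Quadripartite

variable {K A B C D : Type*} [Fintype K] [Fintype A] [DecidableEq A] [Fintype B] [DecidableEq B]
  [Fintype C] [DecidableEq C] [Fintype D] [DecidableEq D]

section Marginals

variable (p : K → ℝ) (a : K → A) (b : K → B) (c : K → C) (d : K → D)

theorem SB_basisMixture :
    SB (basisMixture p fun k => (a k, b k, c k, d k)) = vNEntropy (basisMixture p b) :=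
  congrArg vNEntropy <| by
    ext
    simp [basisMixture_apply, Finset.sum_comm (t := (Finset.univ : Finset K)), ite_and]

theorem SC_basisMixture :
    SC (basisMixture p fun k => (a k, b k, c k, d k)) = vNEntropy (basisMixture p c) :=
  congrArg vNEntropy <| by
    ext
    simp [basisMixture_apply, Finset.sum_comm (t := (Finset.univ : Finset K)), ite_and]

theorem SD_basisMixture :
    SD (basisMixture p fun k => (a k, b k, c k, d k)) = vNEntropy (basisMixture p d) :=
  congrArg vNEntropy <| by
    ext
    simp [basisMixture_apply, Finset.sum_comm (t := (Finset.univ : Finset K)), ite_and]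

theorem SAB_basisMixture :
    SAB (basisMixture p fun k => (a k, b k, c k, d k)) =
      vNEntropy (basisMixture p fun k => (a k, b k)) :=
  congrArg vNEntropy <| by
    ext
    simp [basisMixture_apply, Finset.sum_comm (t := (Finset.univ : Finset K)), ite_and,
      Prod.ext_iff]

theorem SAD_basisMixture :
    SAD (basisMixture p fun k => (a k, b k, c k, d k)) =
      vNEntropy (basisMixture p fun k => (a k, d k)) :=
  congrArg vNEntropy <| by
    ext
    simp [basisMixture_apply, Finset.sum_comm (t := (Finset.univ : Finset K)), ite_and,
      Prod.ext_iff]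

theorem SBC_basisMixture :
    SBC (basisMixture p fun k => (a k, b k, c k, d k)) =
      vNEntropy (basisMixture p fun k => (b k, c k)) :=
  congrArg vNEntropy <| by
    ext
    simp [basisMixture_apply, Finset.sum_comm (t := (Finset.univ : Finset K)), ite_and,
      Prod.ext_iff]

theorem SBD_basisMixture :
    SBD (basisMixture p fun k => (a k, b k, c k, d k)) =
      vNEntropy (basisMixture p fun k => (b k, d k)) :=
  congrArg vNEntropy <| by
    ext
    simp [basisMixture_apply, Finset.sum_comm (t := (Finset.univ : Finset K)), ite_and,
      Prod.ext_iff]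

theorem SCD_basisMixture :
    SCD (basisMixture p fun k => (a k, b k, c k, d k)) =
      vNEntropy (basisMixture p fun k => (c k, d k)) :=
  congrArg vNEntropy <| by
    ext
    simp [basisMixture_apply, Finset.sum_comm (t := (Finset.univ : Finset K)), ite_and,
      Prod.ext_iff]

theorem SABC_basisMixture :
    SABC (basisMixture p fun k => (a k, b k, c k, d k)) =
      vNEntropy (basisMixture p fun k => (a k, b k, c k)) :=
  congrArg vNEntropy <| by
    ext
    simp [basisMixture_apply, Finset.sum_comm (t := (Finset.univ : Finset K)), ite_and,
      Prod.ext_iff]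

theorem SABD_basisMixture :
    SABD (basisMixture p fun k => (a k, b k, c k, d k)) =
      vNEntropy (basisMixture p fun k => (a k, b k, d k)) :=
  congrArg vNEntropy <| by
    ext
    simp [basisMixture_apply, Finset.sum_comm (t := (Finset.univ : Finset K)), ite_and,
      Prod.ext_iff]

end Marginals

theorem SAB_basisMixture_of_injective (p : K → ℝ) (a : K → A) {b : K → B} (hb : b.Injective)
    (c : K → C) (d : K → D) :
    SAB (basisMixture p fun k => (a k, b k, c k, d k)) = shannonEntropy p := by
  rw [SAB_basisMixture, vNEntropy_basisMixture_of_injective]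
  exact fun _ _ h => hb (congrArg Prod.snd h)

theorem SABC_basisMixture_of_injective (p : K → ℝ) (a : K → A) {b : K → B} (hb : b.Injective)
    (c : K → C) (d : K → D) :
    SABC (basisMixture p fun k => (a k, b k, c k, d k)) = shannonEntropy p := by
  rw [SABC_basisMixture, vNEntropy_basisMixture_of_injective]
  exact fun _ _ h => hb (congrArg (·.2.1) h)

theorem saturates_ABC_of_injective (p : K → ℝ) (a : K → A) {b : K → B} (hb : b.Injective)
    (c : K → C) (d : K → D) {ρ : Matrix (A × B × C × D) (A × B × C × D) ℂ}
    (hρ : ρ = basisMixture p fun k => (a k, b k, c k, d k)) :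
    SAB ρ + SBC ρ - SABC ρ - SB ρ = 0 := by
  have hBC : SBC ρ = shannonEntropy p := by
    rw [hρ, SBC_basisMixture, vNEntropy_basisMixture_of_injective]
    exact fun _ _ h => hb (congrArg Prod.fst h)
  have hB : SB ρ = shannonEntropy p := by
    rw [hρ, SB_basisMixture, vNEntropy_basisMixture_of_injective p hb]
  rw [hBC, hB, hρ, SAB_basisMixture_of_injective p a hb, SABC_basisMixture_of_injective p a hb]
  ring

theorem saturates_ADB_of_const (p : K → ℝ) (a : A) (b : K → B) (c : K → C) (d : K → D)
    {ρ : Matrix (A × B × C × D) (A × B × C × D) ℂ}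
    (hρ : ρ = basisMixture p fun k => (a, b k, c k, d k)) :
    SAD ρ + SBD ρ - SABD ρ - SD ρ = 0 := by
  have hAD : SAD ρ = SD ρ := by
    rw [hρ, SAD_basisMixture, SD_basisMixture]
    exact vNEntropy_basisMixture_comp p d (Prod.mk_right_injective a)
  have hABD : SABD ρ = SBD ρ := by
    rw [hρ, SABD_basisMixture, SBD_basisMixture]
    exact vNEntropy_basisMixture_comp p (fun k => (b k, d k)) (Prod.mk_right_injective a)
  linarith

theorem mutualInfo_C_D_eq_zero_of_const {p : K → ℝ} (hsum : ∑ k, p k = 1) (a : K → A) (b : K → B)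
    (c : K → C) (d : D) {ρ : Matrix (A × B × C × D) (A × B × C × D) ℂ}
    (hρ : ρ = basisMixture p fun k => (a k, b k, c k, d)) :
    SC ρ + SD ρ - SCD ρ = 0 := by
  have hCD : SCD ρ = SC ρ := by
    rw [hρ, SCD_basisMixture, SC_basisMixture]
    exact vNEntropy_basisMixture_comp p c (f := (·, d)) (Prod.mk_left_injective d)
  have hD : SD ρ = 0 := by
    rw [hρ, SD_basisMixture, vNEntropy_basisMixture_const hsum]
  linarith

theorem mutualInfo_C_AB_eq_shannonEntropy_of_injective (p : K → ℝ) (a : K → A) {b : K → B}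
    (hb : b.Injective) {c : K → C} (hc : c.Injective) (d : K → D)
    {ρ : Matrix (A × B × C × D) (A × B × C × D) ℂ}
    (hρ : ρ = basisMixture p fun k => (a k, b k, c k, d k)) :
    SC ρ + SAB ρ - SABC ρ = shannonEntropy p := by
  rw [hρ, SC_basisMixture, vNEntropy_basisMixture_of_injective p hc,
    SAB_basisMixture_of_injective p a hb, SABC_basisMixture_of_injective p a hb]
  ring

end Quadripartite

theorem witness_eq_basisMixture :
    (Matrix.of fun p q : Fin 2 × Fin 2 × Fin 2 × Fin 2 =>
      if p = q ∧ p.1 = 0 ∧ p.2.2.2 = 0 ∧ p.2.1 = p.2.2.1 then (1 / 2 : ℂ) else 0) =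
      basisMixture (fun _ => 1 / 2) fun k : Fin 2 => (0, k, k, 0) := by
  ext ⟨a, b, c, d⟩ q
  rw [Matrix.of_apply, basisMixture_apply, Finset.sum_eq_single b]
  · have label_iff : (a, b, c, d) = q ∧ a = 0 ∧ d = 0 ∧ b = c ↔
        (0, b, b, 0) = (a, b, c, d) ∧ (0, b, b, 0) = q := by grind
    simp [label_iff]
  · exact fun k _ hk => if_neg fun h => hk (congrArg (·.2.1) h.1)
  · exact fun hb => absurd (Finset.mem_univ b) hb

/-- **Remark (necessity of the second constraint).** There is a four-qubit state
saturating strong subadditivity for the triples `ABC` and `ADB`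
(`I(A;C|B) = 0` and `I(A;B|D) = 0`), yet with `I(C;D) = 0` and `I(C;AB) = 1`,
hence `I(C;D) < I(C;AB)`.  Witness:
`ρ = ½(|00⟩⟨00| + |11⟩⟨11|)^{BC} ⊗ |00⟩⟨00|^{AD}`. -/
theorem counterexample_two_constraints_ABC_ADB :
    ∃ ρ : Matrix (Fin 2 × Fin 2 × Fin 2 × Fin 2) (Fin 2 × Fin 2 × Fin 2 × Fin 2) ℂ,
      ρ = (Matrix.of fun p q : Fin 2 × Fin 2 × Fin 2 × Fin 2 =>
            if p = q ∧ p.1 = 0 ∧ p.2.2.2 = 0 ∧ p.2.1 = p.2.2.1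
            then (1 / 2 : ℂ) else 0) ∧
      IsState ρ ∧
      SAB ρ + SBC ρ - SABC ρ - SB ρ = 0 ∧
      SAD ρ + SBD ρ - SABD ρ - SD ρ = 0 ∧
      SC ρ + SD ρ - SCD ρ = 0 ∧
      SC ρ + SAB ρ - SABC ρ = 1 ∧
      SC ρ + SD ρ - SCD ρ < SC ρ + SAB ρ - SABC ρ := by
  refine ⟨_, rfl, ?_⟩
  rw [witness_eq_basisMixture]
  set ρ := basisMixture (fun _ => 1 / 2) fun k : Fin 2 => ((0 : Fin 2), k, k, (0 : Fin 2)) with hρ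
  have hsum : ∑ _ : Fin 2, (1 / 2 : ℝ) = 1 := by norm_num
  have hstate : IsState ρ := isState_basisMixture (fun _ => by norm_num) hsum _
  have hABC := saturates_ABC_of_injective _ _ Function.injective_id _ _ hρ
  have hADB := saturates_ADB_of_const _ _ _ _ _ hρ
  have hCD := mutualInfo_C_D_eq_zero_of_const hsum _ _ _ _ hρ
  have hCAB : SC ρ + SAB ρ - SABC ρ = 1 := by
    rw [mutualInfo_C_AB_eq_shannonEntropy_of_injective _ _ Function.injective_id
      Function.injective_id _ hρ]
    simpa using shannonEntropy_uniform (Fin 2)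
  exact ⟨hstate, hABC, hADB, hCD, hCAB, by rw [hCD, hCAB]; exact one_pos⟩
end
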